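/- arXiv:1805.00041 — 4 statements merged into one kernel-verified Lean document; each statement's English description precedes it below -/
import Mathlib

section
/- (Lemma 1) In the scheduling model with common chunk size X > 0, the backward greedy selection G is itself feasible, and |G| ≥ |S| for every feasible set S ⊆ {1,…,C}. Equivalently, the backward greedy selection achieves the minimum possible number of skipped chunks C − |G| among all feasible selections. -/
open scoped Classical

structure SchedModel where
  C : ℕ
  hC : 1 ≤ C
  L : ℝ
  hL : 0 < L
  B : ℕ → ℝ
  hB : ∀ j, 0 ≤ B j
  t : ℕ → ℕ
  d : ℕ → ℕ
  ht : ∀ i, 1 ≤ t i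
  htd : ∀ i, t i ≤ d i
  tmono : Monotone t
  dmono : Monotone d
  Bm : ℝ
  hBm : 0 < Bm

/-- A feasible schedule for per-chunk download amounts `X`. -/
def SchedModel.IsSchedule (M : SchedModel) (X : ℕ → ℝ) (z : ℕ → ℕ → ℝ) : Prop :=
  (∀ i j, 0 ≤ z i j) ∧
  (∀ i j, (j < M.t i ∨ M.d i < j) → z i j = 0) ∧
  (∀ i ∈ Finset.Icc 1 M.C, ∑ j ∈ Finset.Icc 1 (M.d i), z i j = X i) ∧
  (∀ j, ∑ i ∈ Finset.Icc 1 M.C, z i j ≤ M.B j) ∧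
  (∀ τ, M.L * (((Finset.Icc 1 M.C).filter
      (fun i => τ < M.d i ∧ 0 < ∑ j ∈ Finset.Icc 1 τ, z i j)).card : ℝ) ≤ M.Bm)

/-- With common chunk size `X`, a set `S` of chunks is feasible if there is a
schedule downloading amount `X` for every chunk in `S` and `0` otherwise. -/
def SchedModel.FeasibleSet (M : SchedModel) (X : ℝ) (S : Finset ℕ) : Prop :=
  ∃ z : ℕ → ℕ → ℝ, M.IsSchedule (fun i => if i ∈ S then X else 0) z

/-- Backward greedy selection after processing the `k` chunks `C, C−1, …, C−k+1`:
a chunk is added iff the selection so far together with it is feasible. -/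
noncomputable def SchedModel.backGreedyAux (M : SchedModel) (X : ℝ) : ℕ → Finset ℕ
  | 0 => ∅
  | k + 1 =>
    let G := M.backGreedyAux X k
    if M.FeasibleSet X (insert (M.C - k) G) then insert (M.C - k) G else G

/-- The backward greedy selection (chunks processed in decreasing order C,…,1). -/
noncomputable def SchedModel.backGreedy (M : SchedModel) (X : ℝ) : Finset ℕ :=
  M.backGreedyAux X M.C

/-!
For a common chunk size `X` the combinatorial buffer constraint can be removed by serving the chunks
of `S` in index order, which at each time keeps the number of started chunks minimal. Write `D_S(τ)`
and `T_S(τ)` for the number of `i ∈ S` with `d i ≤ τ` and `t i ≤ τ`, and let `K = ⌊Bm / L⌋`. A set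
`S` is feasible if and only if there is a total download curve `W`, nondecreasing and within the
bandwidth, such that `X · D_S ≤ W ≤ X · min (T_S, K + D_S)`.

Let `S = A ∪ {a} ∪ G` and `H = {i} ∪ G` be feasible with `A < a < i < G`, and put
`S' = A ∪ {i} ∪ G`. As `t` and `d` are nondecreasing, `D_{S'} = min (D_S, |A| + D_H)` and
`T_{S'} = min (T_S, |A| + T_H)`, so the curve `min (W_S, X |A| + W_H)` shows that `S'` is feasible.
By such exchanges, any feasible set can be transformed, without losing cardinality, into sets that
agree with the greedy selection on longer and longer final segments of the chunks.
-/

open Finset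

/-! ### Counting chunks -/

section Counting

variable {α β : Type*}

lemma exists_eq_insert_union_filter_lt [LinearOrder α] {U : Finset α} {i : α}
    (hi : i ∉ U) (hlt : ∃ x ∈ U, x < i) :
    ∃ a < i, ∃ A : Finset α, (∀ x ∈ A, x < a) ∧ U = insert a (A ∪ {x ∈ U | i < x}) := by
  obtain ⟨a, ⟨haU, hai⟩, hmax⟩ : ∃ a, (a ∈ U ∧ a < i) ∧ ∀ x ∈ U, x < i → x ≤ a := by
    simpa using exists_max_image {x ∈ U | x < i} id (filter_nonempty_iff.mpr hlt)
  have hcases : ∀ x ∈ U, x < a ∨ x = a ∨ i < x := fun x hx => by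
    rcases lt_trichotomy x i with h | rfl | h
    · exact (hmax x hx h).lt_or_eq.imp_right .inl
    · exact absurd hx hi
    · exact .inr (.inr h)
  exact ⟨a, hai, {x ∈ U | x < a}, by grind, by grind⟩

section LE

variable [LE β] [DecidableLE β]

/-- The number of elements of `S` whose `f`-value is at most `τ`: for `f = d` the chunks that have
expired by slot `τ`, for `f = t` those that have been released. -/
def countLE (f : α → β) (S : Finset α) (τ : β) : ℕ := #{i ∈ S | f i ≤ τ}

lemma countLE_le_card (f : α → β) (S : Finset α) (τ : β) : countLE f S τ ≤ #S :=
  card_filter_le _ _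

lemma countLE_union_of_disjoint [DecidableEq α] {S T : Finset α} (h : Disjoint S T)
    (f : α → β) (τ : β) :
    countLE f (S ∪ T) τ = countLE f S τ + countLE f T τ := by
  rw [countLE, filter_union, card_union_of_disjoint (disjoint_filter_filter h)]
  rfl

lemma countLE_insert_of_notMem [DecidableEq α] {a : α} {S : Finset α} (h : a ∉ S)
    (f : α → β) (τ : β) :
    countLE f (insert a S) τ = countLE f S τ + if f a ≤ τ then 1 else 0 := by
  rw [insert_eq, union_comm, countLE_union_of_disjoint (disjoint_singleton_right.mpr h)]
  simp only [countLE, filter_singleton]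
  split_ifs <;> rfl

lemma sum_filter_ite_mem_eq_mul_countLE [DecidableEq α] {R : Type*} [Semiring R] {S U : Finset α}
    (hS : S ⊆ U) (f : α → β) (τ : β) (r : R) :
    ∑ i ∈ U with f i ≤ τ, (if i ∈ S then r else 0) = r * countLE f S τ := by
  have hfilter : {i ∈ U | f i ≤ τ ∧ i ∈ S} = {i ∈ S | f i ≤ τ} := by grind
  rw [← sum_filter, filter_filter, hfilter, sum_const, nsmul_eq_mul, Nat.cast_comm, countLE]

end LE

section Monotone

variable [Preorder β] [DecidableLE β]

lemma countLE_insert_union_eq_min [LinearOrder α] {f : α → β} (hf : Monotone f)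
    {A G : Finset α} {a i : α} (hA : ∀ x ∈ A, x < a) (hai : a < i) (hG : ∀ x ∈ G, i < x) (τ : β) :
    countLE f (insert i (A ∪ G)) τ =
      min (countLE f (insert a (A ∪ G)) τ) (#A + countLE f (insert i G) τ) := by
  have hAG : Disjoint A G :=
    disjoint_left.mpr fun x hxA hxG => lt_asymm ((hA x hxA).trans hai) (hG x hxG)
  have hiG : i ∉ G := fun h => lt_irrefl _ (hG i h)
  have hi : i ∉ A ∪ G := notMem_union.mpr ⟨fun h => lt_asymm hai (hA i h), hiG⟩
  have ha : a ∉ A ∪ G :=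
    notMem_union.mpr ⟨fun h => lt_irrefl _ (hA a h), fun h => lt_asymm hai (hG a h)⟩
  have hAcard := countLE_le_card f A τ
  have hA_all : f a ≤ τ → countLE f A τ = #A := fun h => by
    rw [countLE, filter_true_of_mem fun x hx => (hf (hA x hx).le).trans h]
  have hia : f i ≤ τ → f a ≤ τ := (hf hai.le).trans
  rw [countLE_insert_of_notMem hi, countLE_insert_of_notMem ha, countLE_insert_of_notMem hiG,
    countLE_union_of_disjoint hAG]
  split_ifs <;> grind

lemma countLE_le_count {f : ℕ → β} (hf : Monotone f) (S : Finset ℕ) {i : ℕ} {τ : β}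
    (h : τ < f i) : countLE f S τ ≤ Nat.count (· ∈ S) i := by
  rw [Nat.count_eq_card_filter_range]
  refine card_le_card fun k hk => ?_
  obtain ⟨hkS, hkτ⟩ := mem_filter.mp hk
  exact mem_filter.mpr ⟨mem_range.mpr (hf.reflect_lt (hkτ.trans_lt h)), hkS⟩

lemma count_succ_le_countLE {f : ℕ → β} (hf : Monotone f) (S : Finset ℕ) {i : ℕ} {τ : β}
    (h : f i ≤ τ) : Nat.count (· ∈ S) (i + 1) ≤ countLE f S τ := by
  rw [Nat.count_eq_card_filter_range]
  refine card_le_card fun k hk => ?_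
  obtain ⟨hki, hkS⟩ := mem_filter.mp hk
  exact mem_filter.mpr ⟨hkS, (hf (mem_range_succ_iff.mp hki)).trans h⟩

end Monotone

end Counting

/-! ### Truncated intervals -/

section LengthBelow

variable {α : Type*} [AddCommGroup α] [LinearOrder α] {p q v w : α}

/-- The length of the part of the interval `[p, q]` that lies below `w`. -/
def lengthBelow (p q w : α) : α := min w q - min w p

lemma lengthBelow_eq_zero (hpq : p ≤ q) (h : w ≤ p) : lengthBelow p q w = 0 := by
  rw [lengthBelow, min_eq_left h, min_eq_left (h.trans hpq), sub_self]

lemma lengthBelow_eq_sub (hpq : p ≤ q) (h : q ≤ w) : lengthBelow p q w = q - p := by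
  rw [lengthBelow, min_eq_right h, min_eq_right (hpq.trans h)]

lemma lengthBelow_mono [IsOrderedAddMonoid α] (hpq : p ≤ q) : Monotone (lengthBelow p q) :=
  fun v w hvw => by grind [lengthBelow]

lemma lengthBelow_sub_le [IsOrderedAddMonoid α] (hpq : p ≤ q) (hvw : v ≤ w) :
    lengthBelow p q w - lengthBelow p q v ≤ w - v := by
  grind [lengthBelow]

lemma sum_lengthBelow (P : ℕ → α) (n : ℕ) (w : α) :
    ∑ i ∈ Icc 1 n, lengthBelow (P i) (P (i + 1)) w = lengthBelow (P 1) (P (n + 1)) w := by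
  rw [← Ico_add_one_right_eq_Icc]
  exact sum_Ico_sub (fun i => min w (P i)) (Nat.le_add_left 1 n)

end LengthBelow

/-! ### Schedules and profiles -/

namespace SchedModel

variable {M : SchedModel} {X : ℝ} {S U : Finset ℕ}

/-- The number of chunks that fit into the playback buffer. -/
noncomputable def bufferChunks (M : SchedModel) : ℕ := ⌊M.Bm / M.L⌋₊

lemma mul_le_Bm_iff (M : SchedModel) (n : ℕ) : M.L * n ≤ M.Bm ↔ n ≤ M.bufferChunks := by
  rw [bufferChunks, Nat.le_floor_iff (div_nonneg M.hBm.le M.hL.le), le_div_iff₀ M.hL, mul_comm]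

/-- The amount of chunk `i` that the schedule `z` has downloaded by the end of slot `τ`. -/
def downloaded (z : ℕ → ℕ → ℝ) (i τ : ℕ) : ℝ := ∑ j ∈ Icc 1 τ, z i j

/-- The total download curves that are possible for the chunk set `S`: every expired chunk is
complete, and the curve stays below the total size both of the released chunks and of the expired
chunks together with a full buffer. -/
structure IsProfile (M : SchedModel) (X : ℝ) (S : Finset ℕ) (W : ℕ → ℝ) : Prop where
  mono : Monotone W
  le_add_bandwidth : ∀ j, W (j + 1) ≤ W j + M.B (j + 1)
  expired_le : ∀ τ, X * countLE M.d S τ ≤ W τ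
  le_released : ∀ τ, W τ ≤ X * countLE M.t S τ
  le_buffer_add_expired : ∀ τ, W τ ≤ X * (M.bufferChunks + countLE M.d S τ : ℕ)

namespace IsSchedule

variable {a : ℕ → ℝ} {z : ℕ → ℕ → ℝ} {i τ : ℕ}

lemma downloaded_mono (h : M.IsSchedule a z) (i : ℕ) : Monotone (downloaded z i) := fun _ _ hστ =>
  sum_le_sum_of_subset_of_nonneg (Icc_subset_Icc_right hστ) fun j _ _ => h.1 i j

lemma downloaded_nonneg (h : M.IsSchedule a z) (i τ : ℕ) : 0 ≤ downloaded z i τ :=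
  sum_nonneg fun j _ => h.1 i j

lemma downloaded_eq_zero (h : M.IsSchedule a z) (hτ : τ < M.t i) : downloaded z i τ = 0 :=
  sum_eq_zero fun j hj => h.2.1 i j (.inl ((mem_Icc.mp hj).2.trans_lt hτ))

lemma downloaded_eq (h : M.IsSchedule a z) (hi : i ∈ Icc 1 M.C) (hτ : M.d i ≤ τ) :
    downloaded z i τ = a i := by
  rw [← h.2.2.1 i hi]
  refine (sum_subset (Icc_subset_Icc_right hτ) fun j hj hjd => h.2.1 i j (.inr ?_)).symm
  grind

lemma downloaded_le (h : M.IsSchedule a z) (hi : i ∈ Icc 1 M.C) (τ : ℕ) :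
    downloaded z i τ ≤ a i :=
  (h.downloaded_mono i (le_max_left τ (M.d i))).trans_eq (h.downloaded_eq hi (le_max_right _ _))

lemma sum_downloaded_succ_le (h : M.IsSchedule a z) (j : ℕ) :
    ∑ i ∈ Icc 1 M.C, downloaded z i (j + 1) ≤
      ∑ i ∈ Icc 1 M.C, downloaded z i j + M.B (j + 1) := by
  simp only [downloaded, sum_Icc_succ_top (Nat.le_add_left 1 j), sum_add_distrib]
  exact add_le_add_right (h.2.2.2.1 (j + 1)) _

lemma sum_expired_le (h : M.IsSchedule a z) (τ : ℕ) :
    ∑ i ∈ Icc 1 M.C with M.d i ≤ τ, a i ≤ ∑ i ∈ Icc 1 M.C, downloaded z i τ := by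
  rw [sum_filter]
  refine sum_le_sum fun i hi => ?_
  split_ifs with hd
  · exact (h.downloaded_eq hi hd).ge
  · exact h.downloaded_nonneg i τ

lemma sum_downloaded_le_released (h : M.IsSchedule a z) (τ : ℕ) :
    ∑ i ∈ Icc 1 M.C, downloaded z i τ ≤ ∑ i ∈ Icc 1 M.C with M.t i ≤ τ, a i := by
  rw [sum_filter]
  refine sum_le_sum fun i hi => ?_
  split_ifs with ht
  · exact h.downloaded_le hi τ
  · exact (h.downloaded_eq_zero (not_le.mp ht)).le

lemma sum_downloaded_le_buffered_add_expired (h : M.IsSchedule a z) (τ : ℕ) :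
    ∑ i ∈ Icc 1 M.C, downloaded z i τ ≤
      ∑ i ∈ Icc 1 M.C with τ < M.d i ∧ 0 < downloaded z i τ, a i +
        ∑ i ∈ Icc 1 M.C with M.d i ≤ τ, a i := by
  rw [sum_filter, sum_filter, ← sum_add_distrib]
  refine sum_le_sum fun i hi => ?_
  have hle := h.downloaded_le hi τ
  by_cases hd : M.d i ≤ τ
  · simp [hd, not_lt.mpr hd, hle]
  · by_cases hpos : 0 < downloaded z i τ
    · simp [hd, not_le.mp hd, hpos, hle]
    · simp [hd, hpos, not_lt.mp hpos]

lemma card_buffered_le (h : M.IsSchedule a z) (τ : ℕ) :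
    #{i ∈ Icc 1 M.C | τ < M.d i ∧ 0 < downloaded z i τ} ≤ M.bufferChunks :=
  (M.mul_le_Bm_iff _).mp (h.2.2.2.2 τ)

lemma isProfile (h : M.IsSchedule (fun i => if i ∈ S then X else 0) z) (hX : 0 ≤ X)
    (hS : S ⊆ Icc 1 M.C) : M.IsProfile X S fun τ => ∑ i ∈ Icc 1 M.C, downloaded z i τ where
  mono _ _ hστ := sum_le_sum fun i _ => h.downloaded_mono i hστ
  le_add_bandwidth := h.sum_downloaded_succ_le
  expired_le τ :=
    (sum_filter_ite_mem_eq_mul_countLE hS M.d τ X).ge.trans (h.sum_expired_le τ)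
  le_released τ :=
    (h.sum_downloaded_le_released τ).trans_eq (sum_filter_ite_mem_eq_mul_countLE hS M.t τ X)
  le_buffer_add_expired τ := by
    refine (h.sum_downloaded_le_buffered_add_expired τ).trans ?_
    rw [sum_filter_ite_mem_eq_mul_countLE hS M.d τ X, Nat.cast_add, mul_add]
    gcongr
    calc ∑ i ∈ Icc 1 M.C with τ < M.d i ∧ 0 < downloaded z i τ, (if i ∈ S then X else 0)
        ≤ #{i ∈ Icc 1 M.C | τ < M.d i ∧ 0 < downloaded z i τ} • X :=
          sum_le_card_nsmul _ _ _ fun i _ => by split_ifs <;> simp [hX]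
      _ ≤ X * M.bufferChunks := by
          rw [nsmul_eq_mul, mul_comm]
          gcongr
          exact h.card_buffered_le τ

lemma restrict (h : M.IsSchedule a z) (U : Finset ℕ) :
    M.IsSchedule (fun i => if i ∈ U then a i else 0) (fun i j => if i ∈ U then z i j else 0) := by
  obtain ⟨hz, hwin, hsum, hcap, hbuf⟩ := h
  have hle : ∀ i j, (if i ∈ U then z i j else 0) ≤ z i j := fun i j => by
    split_ifs <;> simp [hz i j]
  refine ⟨fun i j => ?_, fun i j hj => ?_, fun i hi => ?_, fun j => ?_, fun τ => ?_⟩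
  · dsimp only
    split_ifs <;> simp [hz i j]
  · simp [hwin i j hj]
  · by_cases hiU : i ∈ U
    · simpa [hiU] using hsum i hi
    · simp [hiU]
  · exact (sum_le_sum fun i _ => hle i j).trans (hcap j)
  · refine le_trans (mul_le_mul_of_nonneg_left (Nat.cast_le.mpr (card_le_card ?_)) M.hL.le) (hbuf τ)
    exact monotone_filter_right _ fun i _ hi =>
      ⟨hi.1, hi.2.trans_le (sum_le_sum fun j _ => hle i j)⟩

end IsSchedule

lemma FeasibleSet.exists_isProfile (h : M.FeasibleSet X S) (hX : 0 ≤ X) (hS : S ⊆ Icc 1 M.C) :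
    ∃ W, M.IsProfile X S W :=
  let ⟨_, hz⟩ := h
  ⟨_, hz.isProfile hX hS⟩

lemma FeasibleSet.mono (h : M.FeasibleSet X S) (hU : U ⊆ S) : M.FeasibleSet X U := by
  obtain ⟨z, hz⟩ := h
  refine ⟨fun i j => if i ∈ U then z i j else 0, ?_⟩
  convert hz.restrict U using 2 with i
  grind

lemma feasibleSet_empty (M : SchedModel) (X : ℝ) : M.FeasibleSet X ∅ :=
  ⟨fun _ _ => 0, by simp, by simp, by simp, by simp [M.hB], by simp [M.hBm.le]⟩

/-! ### First-in-first-out schedules -/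

/-- The schedule that serves the chunks in index order along the total download curve `W`, where
`P i` is the total size of the chunks before `i`: chunk `i` occupies the interval `[P i, P (i + 1)]`
of the downloaded data. -/
noncomputable def fifo (P W : ℕ → ℝ) (i j : ℕ) : ℝ :=
  lengthBelow (P i) (P (i + 1)) (W j) - lengthBelow (P i) (P (i + 1)) (W (j - 1))

section Fifo

variable {P W : ℕ → ℝ}

lemma downloaded_fifo (P W : ℕ → ℝ) (i τ : ℕ) :
    downloaded (fifo P W) i τ =
      lengthBelow (P i) (P (i + 1)) (W τ) - lengthBelow (P i) (P (i + 1)) (W 0) := by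
  induction τ with
  | zero => simp [downloaded]
  | succ τ ih =>
    rw [downloaded] at ih ⊢
    rw [sum_Icc_succ_top (Nat.le_add_left 1 τ), ih, fifo, Nat.add_sub_cancel, sub_add_sub_cancel']

lemma sum_fifo_le (hP : Monotone P) (hW : Monotone W) (n j : ℕ) :
    ∑ i ∈ Icc 1 n, fifo P W i j ≤ W j - W (j - 1) := by
  simp only [fifo, sum_sub_distrib, sum_lengthBelow]
  exact lengthBelow_sub_le (hP (Nat.le_add_left 1 n)) (hW (Nat.sub_le j 1))

lemma isSchedule_fifo (hP : Monotone P) (hW : Monotone W)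
    (hB : ∀ j, W (j + 1) ≤ W j + M.B (j + 1))
    (ht : ∀ i τ, τ < M.t i → W τ ≤ P i) (hd : ∀ i τ, M.d i ≤ τ → P (i + 1) ≤ W τ)
    (hbuf : ∀ τ, #{i ∈ Icc 1 M.C | τ < M.d i ∧ P i < W τ ∧ P i ≠ P (i + 1)} ≤ M.bufferChunks) :
    M.IsSchedule (fun i => P (i + 1) - P i) (fifo P W) := by
  have hPi i : P i ≤ P (i + 1) := hP i.le_succ
  have hearly i τ (h : τ < M.t i) : lengthBelow (P i) (P (i + 1)) (W τ) = 0 :=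
    lengthBelow_eq_zero (hPi i) (ht i τ h)
  have hlate i τ (h : M.d i ≤ τ) : lengthBelow (P i) (P (i + 1)) (W τ) = P (i + 1) - P i :=
    lengthBelow_eq_sub (hPi i) (hd i τ h)
  have hdown i τ : ∑ j ∈ Icc 1 τ, fifo P W i j = lengthBelow (P i) (P (i + 1)) (W τ) := by
    rw [← downloaded, downloaded_fifo, hearly i 0 (M.ht i), sub_zero]
  refine ⟨fun i j => ?_, fun i j hj => ?_, fun i _ => ?_, fun j => ?_, fun τ => ?_⟩
  · exact sub_nonneg.mpr (lengthBelow_mono (hPi i) (hW (Nat.sub_le j 1)))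
  · rcases hj with hj | hj
    · rw [fifo, hearly i j hj, hearly i (j - 1) (by omega), sub_self]
    · rw [fifo, hlate i j hj.le, hlate i (j - 1) (by omega), sub_self]
  · rw [hdown, hlate i _ le_rfl]
  · refine (sum_fifo_le hP hW M.C j).trans ?_
    rcases j with _ | j
    · simpa using M.hB 0
    · simpa [add_comm] using hB j
  · rw [mul_le_Bm_iff]
    refine (card_le_card (monotone_filter_right _ fun i _ hi => ?_)).trans (hbuf τ)
    obtain ⟨hdi, hpos⟩ := hi
    rw [hdown] at hpos
    refine ⟨hdi, not_le.mp fun h => ?_, fun h => ?_⟩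
    · exact hpos.ne' (lengthBelow_eq_zero (hPi i) h)
    · rw [← h, lengthBelow, sub_self] at hpos
      exact hpos.false

end Fifo

/-- By the buffer bound on the profile, the ranks within `S` of the buffered chunks lie in an
interval of length `M.bufferChunks`. -/
lemma IsProfile.card_buffered_le {W : ℕ → ℝ} (h : M.IsProfile X S W) (hX : 0 ≤ X) (τ : ℕ) :
    #{i ∈ S | τ < M.d i ∧ X * Nat.count (· ∈ S) i < W τ} ≤ M.bufferChunks := by
  set D := countLE M.d S τ
  calc #{i ∈ S | τ < M.d i ∧ X * Nat.count (· ∈ S) i < W τ}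
      ≤ #(Ico D (M.bufferChunks + D)) := ?_
    _ = M.bufferChunks := by rw [Nat.card_Ico, Nat.add_sub_cancel]
  refine card_le_card_of_injOn (Nat.count (· ∈ S)) (fun i hi => ?_) fun i hi k hk hik => ?_
  · obtain ⟨-, hdi, hlt⟩ := mem_filter.mp hi
    refine mem_Ico.mpr ⟨countLE_le_count M.dmono S hdi, ?_⟩
    exact_mod_cast lt_of_mul_lt_mul_left (hlt.trans_le (h.le_buffer_add_expired τ)) hX
  · exact Nat.count_injective (mem_filter.mp hi).1 (mem_filter.mp hk).1 hik

lemma IsProfile.feasibleSet {W : ℕ → ℝ} (h : M.IsProfile X S W) (hX : 0 ≤ X) :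
    M.FeasibleSet X S := by
  set P : ℕ → ℝ := fun i => X * Nat.count (· ∈ S) i
  have hP : Monotone P := fun i k hik => by
    dsimp only [P]
    gcongr
  have hsize i : P (i + 1) - P i = if i ∈ S then X else 0 := by
    simp only [P, Nat.count_succ]
    split_ifs <;> push_cast <;> ring
  refine ⟨fifo P W, ?_⟩
  simp only [← hsize]
  refine isSchedule_fifo hP h.mono h.le_add_bandwidth (fun i τ hτ => ?_) (fun i τ hτ => ?_)
    fun τ => (card_le_card fun i hi => ?_).trans (h.card_buffered_le hX τ)
  · refine (h.le_released τ).trans ?_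
    dsimp only [P]
    gcongr
    exact countLE_le_count M.tmono S hτ
  · refine le_trans ?_ (h.expired_le τ)
    dsimp only [P]
    gcongr
    exact count_succ_le_countLE M.dmono S hτ
  · obtain ⟨-, hdi, hlt, hne⟩ := mem_filter.mp hi
    have hiS : i ∈ S := by
      by_contra hiS
      exact hne (sub_eq_zero.mp ((hsize i).trans (if_neg hiS))).symm
    exact mem_filter.mpr ⟨hiS, hdi, hlt⟩

/-! ### The exchange step -/

lemma IsProfile.exchange {A G : Finset ℕ} {a i : ℕ} {V W : ℕ → ℝ} (hX : 0 ≤ X)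
    (hA : ∀ x ∈ A, x < a) (hai : a < i) (hG : ∀ x ∈ G, i < x)
    (hW : M.IsProfile X (insert a (A ∪ G)) W) (hV : M.IsProfile X (insert i G) V) :
    M.IsProfile X (insert i (A ∪ G)) fun τ => min (W τ) (X * #A + V τ) where
  mono := hW.mono.min (hV.mono.const_add _)
  le_add_bandwidth j := by
    rw [← min_add_add_right, add_assoc]
    exact min_le_min (hW.le_add_bandwidth j) (add_le_add_right (hV.le_add_bandwidth j) _)
  expired_le τ := by
    rw [countLE_insert_union_eq_min M.dmono hA hai hG, Nat.cast_min, mul_min_of_nonneg _ _ hX,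
      Nat.cast_add, mul_add]
    exact min_le_min (hW.expired_le τ) (add_le_add_right (hV.expired_le τ) _)
  le_released τ := by
    rw [countLE_insert_union_eq_min M.tmono hA hai hG, Nat.cast_min, mul_min_of_nonneg _ _ hX,
      Nat.cast_add, mul_add]
    exact min_le_min (hW.le_released τ) (add_le_add_right (hV.le_released τ) _)
  le_buffer_add_expired τ := by
    rw [countLE_insert_union_eq_min M.dmono hA hai hG, ← min_add_add_left, Nat.cast_min,
      mul_min_of_nonneg _ _ hX, Nat.add_left_comm, Nat.cast_add #A, mul_add]
    exact min_le_min (hW.le_buffer_add_expired τ)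
      (add_le_add_right (hV.le_buffer_add_expired τ) _)

lemma FeasibleSet.exchange {A G : Finset ℕ} {a i : ℕ} (hX : 0 ≤ X)
    (hA : ∀ x ∈ A, x < a) (hai : a < i) (hG : ∀ x ∈ G, i < x)
    (hS : insert a (A ∪ G) ⊆ Icc 1 M.C) (hi : i ∈ Icc 1 M.C)
    (hSf : M.FeasibleSet X (insert a (A ∪ G))) (hGf : M.FeasibleSet X (insert i G)) :
    M.FeasibleSet X (insert i (A ∪ G)) := by
  have hiG : insert i G ⊆ Icc 1 M.C :=
    insert_subset hi ((subset_union_right.trans (subset_insert a _)).trans hS)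
  obtain ⟨W, hW⟩ := hSf.exists_isProfile hX hS
  obtain ⟨V, hV⟩ := hGf.exists_isProfile hX hiG
  exact (IsProfile.exchange hX hA hai hG hW hV).feasibleSet hX

lemma FeasibleSet.exists_filter_le_eq_insert {i : ℕ} (hX : 0 ≤ X) (hU : U ⊆ Icc 1 M.C)
    (hi : i ∈ Icc 1 M.C) (hUf : M.FeasibleSet X U)
    (hGf : M.FeasibleSet X (insert i {x ∈ U | i < x})) :
    ∃ V ⊆ Icc 1 M.C, M.FeasibleSet X V ∧ #U ≤ #V ∧
      {x ∈ V | i ≤ x} = insert i {x ∈ U | i < x} := by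
  by_cases hiU : i ∈ U
  · exact ⟨U, hU, hUf, le_rfl, by grind⟩
  set G := {x ∈ U | i < x}
  by_cases hlt : ∃ x ∈ U, x < i
  · obtain ⟨a, hai, A, hA, hUeq⟩ := exists_eq_insert_union_filter_lt hiU hlt
    have hG : ∀ x ∈ G, i < x := fun x hx => (mem_filter.mp hx).2
    have hcard : #U = #(A ∪ G) + 1 := by
      rw [hUeq, card_insert_of_notMem (by grind)]
    refine ⟨insert i (A ∪ G), by grind, ?_, ?_, by grind⟩
    · exact FeasibleSet.exchange hX hA hai hG (hUeq ▸ hU) hi (hUeq ▸ hUf) hGf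
    · rw [hcard, card_insert_of_notMem (by grind)]
  · have hUG : U ⊆ insert i G := by grind
    exact ⟨insert i G, by grind, hGf, card_le_card hUG, by grind⟩

/-! ### The greedy selection -/

lemma feasibleSet_backGreedyAux (M : SchedModel) (X : ℝ) (k : ℕ) :
    M.FeasibleSet X (M.backGreedyAux X k) := by
  induction k with
  | zero => exact M.feasibleSet_empty X
  | succ k ih =>
    rw [backGreedyAux]
    split_ifs with h
    exacts [h, ih]

lemma FeasibleSet.exists_filter_eq_backGreedyAux (hX : 0 ≤ X) (hS : S ⊆ Icc 1 M.C)
    (hSf : M.FeasibleSet X S) {k : ℕ} (hk : k ≤ M.C) :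
    ∃ U ⊆ Icc 1 M.C, M.FeasibleSet X U ∧ #S ≤ #U ∧ {x ∈ U | M.C - k < x} = M.backGreedyAux X k := by
  induction k with
  | zero =>
    refine ⟨S, hS, hSf, le_rfl, filter_eq_empty_iff.mpr fun x hx => ?_⟩
    exact not_lt.mpr (mem_Icc.mp (hS hx)).2
  | succ k ih =>
    obtain ⟨U, hU, hUf, hcard, hUG⟩ := ih (Nat.le_of_succ_le hk)
    have hiff x : M.C - (k + 1) < x ↔ M.C - k ≤ x := by omega
    simp only [hiff, backGreedyAux, ← hUG]
    set i := M.C - k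
    have hi : i ∈ Icc 1 M.C := mem_Icc.mpr (by omega)
    split_ifs with h
    · obtain ⟨V, hV, hVf, hUV, hVG⟩ := hUf.exists_filter_le_eq_insert hX hU hi h
      exact ⟨V, hV, hVf, hcard.trans hUV, hVG⟩
    · have hiU : i ∉ U := fun hiU => h (hUf.mono (insert_subset hiU (filter_subset _ _)))
      exact ⟨U, hU, hUf, hcard, by grind⟩

lemma FeasibleSet.card_le_card_backGreedy (hX : 0 ≤ X) (hS : S ⊆ Icc 1 M.C)
    (hSf : M.FeasibleSet X S) : #S ≤ #(M.backGreedy X) := by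
  obtain ⟨U, hU, -, hSU, hUG⟩ := hSf.exists_filter_eq_backGreedyAux hX hS le_rfl
  rwa [backGreedy, ← hUG, filter_true_of_mem]
  intro x hx
  rw [Nat.sub_self]
  exact (mem_Icc.mp (hU hx)).1

end SchedModel

/-- Lemma 1: the backward greedy selection is feasible and maximizes
the number of fetched chunks, equivalently minimizes the number of skipped chunks,
among all feasible selections. -/
theorem backward_greedy_min_skips (M : SchedModel) (X : ℝ) (hX : 0 < X) :
    M.FeasibleSet X (M.backGreedy X) ∧
    (∀ S : Finset ℕ, S ⊆ Finset.Icc 1 M.C → M.FeasibleSet X S →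
      S.card ≤ (M.backGreedy X).card) ∧
    (∀ S : Finset ℕ, S ⊆ Finset.Icc 1 M.C → M.FeasibleSet X S →
      M.C - (M.backGreedy X).card ≤ M.C - S.card) := by
  have hcard (S : Finset ℕ) (hS : S ⊆ Icc 1 M.C) (hSf : M.FeasibleSet X S) :
      #S ≤ #(M.backGreedy X) := hSf.card_le_card_backGreedy hX.le hS
  exact ⟨M.feasibleSet_backGreedyAux X M.C, hcard,
    fun S hS hSf => Nat.sub_le_sub_left (hcard S hS hSf) M.C⟩
end

section
/- In the scheduling model with common chunk size X > 0, the backward greedy selection G dominates every feasible selection on every suffix: for every feasible set S ⊆ {1,…,C} and every index i ∈ {1,…,C}, |S ∩ {i, i+1, …, C}| ≤ |G ∩ {i, i+1, …, C}|. -/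
/-!
Let `K = ⌊Bm / L⌋` be the number of chunks that fit into the buffer, and let `B(τ, σ]` be the
total bandwidth of the slots `τ + 1, …, σ`. A set `S` of chunks is feasible if and only if, for
all slots `τ` and `σ`,

* `X * #{i ∈ S : τ < d i ≤ σ} ≤ B(τ, σ] + X * K`, and
* `X * #{i ∈ S : τ < t i, d i ≤ σ} ≤ B(τ, σ]`.

Necessity is counting. For sufficiency, download every chunk as late as possible, higher indices
last: let `W τ` be the largest amount of work that can be done after slot `τ` when only the
deadlines are respected, stack the chunks of `S` on a work axis in decreasing order of index, and
let slot `j` serve the piece `[W j, W (j - 1)]` of that axis. The first inequality bounds `W` from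
below by enough for the buffer, the second by enough for the release times.

Since `t` and `d` are monotone, each inequality bounds the number of elements of `S` in an
order-connected set of indices. Such conditions have an exchange property: if `s` is the largest
element of `S` below `m`, and `m` is compatible with the elements of `S` above it, then `m` may
replace `s`. For a hereditary family with this property, exchanging from the top down turns any
member into a subset of the backward greedy selection without decreasing a suffix count.
-/

open scoped Classical

open Finset

lemma monotone_min_sub_min {β : Type*} [AddCommGroup β] [LinearOrder β] [IsOrderedAddMonoid β]
    {a b : β} (hab : a ≤ b) : Monotone fun w => min w b - min w a := by
  intro v w hvw
  simp only [min_def]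
  split_ifs <;> grind

section LinearOrder

variable {α : Type*} [LinearOrder α]

lemma card_filter_le_eq_card_filter_lt_add_one {S : Finset α} {i : α} (hi : i ∈ S) :
    #{k ∈ S | i ≤ k} = #{k ∈ S | i < k} + 1 := by
  rw [← card_insert_of_notMem (show i ∉ {k ∈ S | i < k} by simp)]
  congr 1
  grind

lemma sum_card_filter_lt {β : Type*} [AddCommMonoid β] (S : Finset α) (f : ℕ → β) :
    ∑ i ∈ S, f #{k ∈ S | i < k} = ∑ r ∈ range #S, f r := by
  induction S using Finset.induction_on_min with
  | empty => simp
  | insert a S ha ih =>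
    have ha_notMem : a ∉ S := fun h => lt_irrefl a (ha a h)
    have above_min : {k ∈ insert a S | a < k} = S := by grind
    have above_of_mem : ∀ i ∈ S, {k ∈ insert a S | i < k} = {k ∈ S | i < k} := by grind
    rw [sum_insert ha_notMem, card_insert_of_notMem ha_notMem, sum_range_succ_comm, above_min, ← ih]
    exact congrArg (f #S + ·) (sum_congr rfl fun i hi => by rw [above_of_mem i hi])

lemma card_le_of_forall_card_le_card_filter_lt_add {S T : Finset α} {n : ℕ} (hTS : T ⊆ S)
    (h : ∀ i ∈ T, #S ≤ #{k ∈ S | i < k} + n) : #T ≤ n := by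
  obtain rfl | hT := T.eq_empty_or_nonempty
  · simp
  have below_max : T ⊆ {k ∈ S | ¬ T.max' hT < k} := fun k hk =>
    mem_filter.2 ⟨hTS hk, not_lt.2 (T.le_max' k hk)⟩
  have := card_le_card below_max
  have := card_filter_add_card_filter_not (s := S) (T.max' hT < ·)
  have := h _ (T.max'_mem hT)
  omega

/-- The exchange property of a family `F` of finite sets: the largest element `s` of `S ∈ F` below
`m` may be replaced by `m`, provided that `m` together with the elements of `S` above it belongs to
`F`. -/
def HasExchange (F : Set (Finset α)) : Prop :=
  ∀ ⦃S : Finset α⦄ ⦃s m : α⦄, S ∈ F → IsGreatest {k | k ∈ S ∧ k < m} s →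
    insert m {k ∈ S | m < k} ∈ F → insert m (S.erase s) ∈ F

/-- `G` is the result of the backward greedy algorithm for the family `F`: an element is selected
if and only if it can be added to the selected elements above it. -/
def IsBackwardGreedy (F : Set (Finset α)) (G : Finset α) : Prop :=
  ∀ m, m ∈ G ↔ insert m {k ∈ G | m < k} ∈ F

-- If `I` contains `m` but not `s`, then it contains no element of `S` below `m`.
lemma card_filter_exchange_le_max {I : α → Prop} [DecidablePred I] (hI : {i | I i}.OrdConnected)
    {S : Finset α} {s m : α} (hs : IsGreatest {k | k ∈ S ∧ k < m} s) :
    #{i ∈ insert m (S.erase s) | I i} ≤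
      max #{i ∈ S | I i} #{i ∈ insert m {k ∈ S | m < k} | I i} := by
  obtain ⟨⟨hsS, hsm⟩, hmax⟩ := hs
  by_cases hIm : I m
  · by_cases hIs : I s
    · refine le_max_of_le_left ?_
      rw [filter_insert, if_pos hIm, filter_erase,
        ← card_erase_add_one (mem_filter.2 ⟨hsS, hIs⟩)]
      exact card_insert_le _ _
    · refine le_max_of_le_right (card_le_card fun k hk => ?_)
      have not_below : k ∈ S → k < m → ¬ I k := fun hkS hkm hIk =>
        hIs (hI.out hIk hIm ⟨hmax ⟨hkS, hkm⟩, hsm.le⟩)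
      grind
  · refine le_max_of_le_left (card_le_card fun k hk => ?_)
    grind

lemma card_filter_le_le_card_filter_le_exchange {S : Finset α} {s m : α} (hs : s ∈ S)
    (hsm : s ≤ m) (hm : m ∉ S) (i : α) :
    #{k ∈ S | i ≤ k} ≤ #{k ∈ insert m (S.erase s) | i ≤ k} := by
  by_cases his : i ≤ s
  · rw [filter_insert, if_pos (his.trans hsm), filter_erase,
      card_insert_of_notMem (by simp [hm]), card_erase_add_one (mem_filter.2 ⟨hs, his⟩)]
  · refine card_le_card fun k hk => ?_
    grind

section IsBackwardGreedy

variable {F : Set (Finset α)} {G S : Finset α}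

lemma IsBackwardGreedy.exists_agree_ge (hG : IsBackwardGreedy F G) (hlower : IsLowerSet F)
    (hexch : HasExchange F) (hS : S ∈ F) {m : α} (hagree : ∀ k, m < k → (k ∈ S ↔ k ∈ G)) :
    ∃ S' ∈ F, S' ⊆ insert m S ∧ (∀ k, m ≤ k → (k ∈ S' ↔ k ∈ G)) ∧
      ∀ i, #{k ∈ S | i ≤ k} ≤ #{k ∈ S' | i ≤ k} := by
  have above_eq : {k ∈ S | m < k} = {k ∈ G | m < k} := by grind
  by_cases hmS : m ∈ S
  · have hmG : m ∈ G := (hG m).2 <| above_eq ▸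
      hlower (insert_subset hmS (filter_subset _ _)) hS
    exact ⟨S, hS, subset_insert m S, by grind, fun i => le_rfl⟩
  by_cases hmG : m ∈ G
  · have hcompat : insert m {k ∈ S | m < k} ∈ F := above_eq ▸ (hG m).1 hmG
    obtain hempty | hne := {k ∈ S | k < m}.eq_empty_or_nonempty
    · have above : {k ∈ S | m < k} = S := by
        rw [filter_eq_empty_iff] at hempty
        grind
      refine ⟨insert m S, above ▸ hcompat, subset_rfl, by grind, fun i => ?_⟩
      exact card_le_card (filter_subset_filter _ (subset_insert m S))
    · obtain ⟨s, hs⟩ : ∃ s, IsGreatest {k | k ∈ S ∧ k < m} s :=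
        ⟨_, by simpa using isGreatest_max' _ hne⟩
      obtain ⟨hsS, hsm⟩ : s ∈ S ∧ s < m := hs.1
      exact ⟨insert m (S.erase s), hexch hS hs hcompat, insert_subset_insert m (erase_subset s S),
        by clear hs; grind, card_filter_le_le_card_filter_le_exchange hsS hsm.le hmS⟩
  · exact ⟨S, hS, subset_insert m S, by grind, fun i => le_rfl⟩

-- By induction on a finite set `U` such that the elements of `S ∪ G` outside `U` are common to `S`
-- and `G` and lie above `U`.
theorem IsBackwardGreedy.card_filter_le_le (hG : IsBackwardGreedy F G) (hlower : IsLowerSet F)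
    (hexch : HasExchange F) (hS : S ∈ F) (i : α) : #{k ∈ S | i ≤ k} ≤ #{k ∈ G | i ≤ k} := by
  suffices key : ∀ U, ∀ T ∈ F, (∀ k ∈ T ∪ G, k ∉ U → (k ∈ T ∧ k ∈ G) ∧ ∀ u ∈ U, u < k) →
      #{k ∈ T | i ≤ k} ≤ #{k ∈ G | i ≤ k} from
    key (S ∪ G) S hS fun k hk hk' => absurd hk hk'
  intro U
  induction U using Finset.induction_on_max with
  | empty => exact fun T _ hagree => card_le_card (filter_subset_filter _ fun k hk => by grind)
  | insert m U hU ih =>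
    intro T hT hagree
    obtain ⟨T', hT', hsub, hagree', hcard⟩ := hG.exists_agree_ge hlower hexch hT (m := m) (by grind)
    exact (hcard i).trans (ih T' hT' fun k hk hkU => by grind)

end IsBackwardGreedy

end LinearOrder

namespace SchedModel

variable {M : SchedModel} {X : ℝ} {S : Finset ℕ}

/-! ### The counting condition -/

/-- The number of chunks that fit into the playback buffer. -/
noncomputable def bufferCapacity (M : SchedModel) : ℕ := ⌊M.Bm / M.L⌋₊

lemma le_bufferCapacity_iff {n : ℕ} : n ≤ M.bufferCapacity ↔ M.L * n ≤ M.Bm := by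
  rw [bufferCapacity, Nat.le_floor_iff (div_nonneg M.hBm.le M.hL.le), le_div_iff₀ M.hL, mul_comm]

/-- The total bandwidth of the slots `τ + 1, …, σ`. -/
def bandwidth (M : SchedModel) (τ σ : ℕ) : ℝ := ∑ j ∈ Ioc τ σ, M.B j

lemma bandwidth_nonneg (M : SchedModel) (τ σ : ℕ) : 0 ≤ M.bandwidth τ σ :=
  sum_nonneg fun j _ => M.hB j

/-- The Hall-type counting condition that characterizes the feasible sets of chunks of size `X`:
the chunks due in the slots `τ + 1, …, σ`, up to what the buffer can hold at time `τ`, and the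
chunks whose window lies in these slots, fit into the bandwidth of these slots. -/
structure HallCondition (M : SchedModel) (X : ℝ) (S : Finset ℕ) : Prop where
  buffer : ∀ τ σ, X * #{i ∈ S | τ < M.d i ∧ M.d i ≤ σ} ≤ M.bandwidth τ σ + X * M.bufferCapacity
  window : ∀ τ σ, X * #{i ∈ S | τ < M.t i ∧ M.d i ≤ σ} ≤ M.bandwidth τ σ

lemma HallCondition.mono (hX : 0 ≤ X) {T : Finset ℕ} (hTS : T ⊆ S) (hS : M.HallCondition X S) :
    M.HallCondition X T where
  buffer τ σ := le_trans (by gcongr) (hS.buffer τ σ)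
  window τ σ := le_trans (by gcongr) (hS.window τ σ)

lemma hasExchange_hallCondition (hX : 0 ≤ X) : HasExchange {S | M.HallCondition X S} := by
  intro S s m hS hs hcompat
  have bound : ∀ (I : ℕ → Prop) [DecidablePred I] (b : ℝ), {i | I i}.OrdConnected →
      X * #{i ∈ S | I i} ≤ b → X * #{i ∈ insert m {k ∈ S | m < k} | I i} ≤ b →
      X * #{i ∈ insert m (S.erase s) | I i} ≤ b := by
    intro I _ b hI hSb hmb
    obtain hle | hle := le_max_iff.1 (card_filter_exchange_le_max hI hs)
    · exact le_trans (by gcongr) hSb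
    · exact le_trans (by gcongr) hmb
  constructor <;> intro τ σ
  · refine bound _ _ ⟨fun i hi j hj k hk => ?_⟩ (hS.buffer τ σ) (hcompat.buffer τ σ)
    exact ⟨hi.1.trans_le (M.dmono hk.1), (M.dmono hk.2).trans hj.2⟩
  · refine bound _ _ ⟨fun i hi j hj k hk => ?_⟩ (hS.window τ σ) (hcompat.window τ σ)
    exact ⟨hi.1.trans_le (M.tmono hk.1), (M.dmono hk.2).trans hj.2⟩

/-! ### Necessity of the counting condition -/

section IsSchedule

variable {x : ℕ → ℝ} {z : ℕ → ℕ → ℝ}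

lemma IsSchedule.sum_Ioc_eq (hz : M.IsSchedule x z) {i τ σ : ℕ} (hi : i ∈ Icc 1 M.C)
    (hσ : M.d i ≤ σ) (hτ : ∀ j ∈ Icc 1 τ, z i j = 0) : ∑ j ∈ Ioc τ σ, z i j = x i := by
  obtain ⟨-, hwindow, hsum, -, -⟩ := hz
  rw [← hsum i hi]
  refine sum_congr_of_eq_on_inter (fun j hj hj' => hwindow i j (Or.inr ?_))
    (fun j hj hj' => hτ j ?_) fun _ _ _ => rfl
  all_goals
    simp only [mem_Ioc, mem_Icc] at hj hj' ⊢
    omega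

lemma IsSchedule.mul_card_le_bandwidth (hz : M.IsSchedule x z) {T : Finset ℕ}
    (hT : T ⊆ Icc 1 M.C) {τ σ : ℕ} (hx : ∀ i ∈ T, x i = X) (hσ : ∀ i ∈ T, M.d i ≤ σ)
    (hτ : ∀ i ∈ T, ∀ j ∈ Icc 1 τ, z i j = 0) : X * #T ≤ M.bandwidth τ σ := by
  have hslot : ∀ j, ∑ i ∈ T, z i j ≤ M.B j := fun j =>
    (sum_le_sum_of_subset_of_nonneg hT fun i _ _ => hz.1 i j).trans (hz.2.2.2.1 j)
  calc X * #T = ∑ i ∈ T, x i := by rw [sum_congr rfl hx, sum_const, nsmul_eq_mul, mul_comm]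
    _ = ∑ i ∈ T, ∑ j ∈ Ioc τ σ, z i j :=
        sum_congr rfl fun i hi => (hz.sum_Ioc_eq (hT hi) (hσ i hi) (hτ i hi)).symm
    _ = ∑ j ∈ Ioc τ σ, ∑ i ∈ T, z i j := sum_comm
    _ ≤ M.bandwidth τ σ := sum_le_sum fun j _ => hslot j

end IsSchedule

lemma FeasibleSet.hallCondition (hX : 0 ≤ X) (hS : S ⊆ Icc 1 M.C) (h : M.FeasibleSet X S) :
    M.HallCondition X S := by
  obtain ⟨z, hz⟩ := h
  obtain ⟨hnonneg, hwindow, -, -, hbuffer⟩ := id hz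
  have bandwidth_bound : ∀ T ⊆ S, ∀ τ σ, (∀ i ∈ T, M.d i ≤ σ) →
      (∀ i ∈ T, ∀ j ∈ Icc 1 τ, z i j = 0) → X * #T ≤ M.bandwidth τ σ := fun T hT τ σ =>
    hz.mul_card_le_bandwidth (hT.trans hS) fun i hi => if_pos (hT hi)
  constructor <;> intro τ σ
  · let due : Finset ℕ := {i ∈ S | τ < M.d i ∧ M.d i ≤ σ}
    let started : ℕ → Prop := fun i => 0 < ∑ j ∈ Icc 1 τ, z i j
    have hstarted : #{i ∈ due | started i} ≤ M.bufferCapacity := by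
      refine le_bufferCapacity_iff.2 (le_trans ?_ (hbuffer τ))
      have := M.hL.le
      gcongr
      intro i hi
      simp only [due, mem_filter] at hi ⊢
      exact ⟨hS hi.1.1, hi.1.2.1, hi.2⟩
    have hunstarted : X * #{i ∈ due | ¬ started i} ≤ M.bandwidth τ σ := by
      refine bandwidth_bound _ ((filter_subset _ _).trans (filter_subset _ _)) τ σ
        (fun i hi => (mem_filter.1 (mem_filter.1 hi).1).2.2) fun i hi => ?_
      have hle : ∑ j ∈ Icc 1 τ, z i j ≤ 0 := not_lt.1 (mem_filter.1 hi).2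
      exact (sum_eq_zero_iff_of_nonneg fun j _ => hnonneg i j).1
        (hle.antisymm (sum_nonneg fun j _ => hnonneg i j))
    calc X * #due = X * #{i ∈ due | ¬ started i} + X * #{i ∈ due | started i} := by
          rw [← card_filter_add_card_filter_not (s := due) started]; push_cast; ring
      _ ≤ M.bandwidth τ σ + X * M.bufferCapacity := by gcongr
  · refine bandwidth_bound _ (filter_subset _ _) τ σ (fun i hi => (mem_filter.1 hi).2.2)
      fun i hi j hj => hwindow i j (Or.inl ?_)
    exact (mem_Icc.1 hj).2.trans_lt (mem_filter.1 hi).2.1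

/-! ### The latest schedule -/

/-- The largest amount of work on the chunks of `S` that can be done after slot `τ` when each chunk
must be downloaded by its deadline and release times are ignored. By duality it is the least value,
over `σ ≥ τ`, of the bandwidth of the slots `τ + 1, …, σ` plus the work due after `σ`. -/
noncomputable def lateWork (M : SchedModel) (X : ℝ) (S : Finset ℕ) (τ : ℕ) : ℝ :=
  ⨅ σ : Set.Ici τ, (X * #{i ∈ S | σ < M.d i} + M.bandwidth τ σ)

lemma lateWork_le (hX : 0 ≤ X) {τ σ : ℕ} (hσ : τ ≤ σ) :
    M.lateWork X S τ ≤ X * #{i ∈ S | σ < M.d i} + M.bandwidth τ σ := by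
  refine ciInf_le (f := fun σ : Set.Ici τ => X * #{i ∈ S | σ < M.d i} + M.bandwidth τ σ)
    ⟨0, ?_⟩ ⟨σ, hσ⟩
  rintro _ ⟨σ, rfl⟩
  have := M.bandwidth_nonneg τ σ
  positivity

lemma le_lateWork {τ : ℕ} {b : ℝ}
    (h : ∀ σ, τ ≤ σ → b ≤ X * #{i ∈ S | σ < M.d i} + M.bandwidth τ σ) : b ≤ M.lateWork X S τ :=
  le_ciInf fun σ => h σ σ.2

lemma lateWork_nonneg (hX : 0 ≤ X) (τ : ℕ) : 0 ≤ M.lateWork X S τ :=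
  le_lateWork fun σ _ => add_nonneg (by positivity) (M.bandwidth_nonneg τ σ)

lemma lateWork_le_mul_card_due (hX : 0 ≤ X) (τ : ℕ) :
    M.lateWork X S τ ≤ X * #{i ∈ S | τ < M.d i} := by
  simpa [bandwidth] using lateWork_le hX (le_refl τ)

lemma lateWork_antitone (hX : 0 ≤ X) : Antitone (M.lateWork X S) := fun τ τ' hττ' =>
  le_lateWork fun σ _ => (lateWork_le hX (le_max_left τ' σ)).trans <| by
    unfold bandwidth
    gcongr ?_ + ?_
    · gcongr
      exact le_max_right τ' σ
    · refine sum_le_sum_of_subset_of_nonneg (fun j hj => ?_) fun j _ _ => M.hB j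
      simp only [mem_Ioc] at hj ⊢
      omega

lemma lateWork_le_lateWork_succ_add (hX : 0 ≤ X) (τ : ℕ) :
    M.lateWork X S τ ≤ M.lateWork X S (τ + 1) + M.B (τ + 1) := by
  refine sub_le_iff_le_add.1 (le_lateWork fun σ hσ => ?_)
  have hsplit : M.bandwidth τ σ = M.B (τ + 1) + M.bandwidth (τ + 1) σ := by
    rw [bandwidth, bandwidth, ← insert_Ioc_succ_left_eq_Ioc hσ, sum_insert (by simp)]
    rfl
  have := lateWork_le (M := M) (S := S) hX (Nat.le_of_succ_le hσ)
  linarith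

lemma HallCondition.mul_card_due_le_lateWork_add (hS : M.HallCondition X S) (τ : ℕ) :
    X * #{i ∈ S | τ < M.d i} ≤ M.lateWork X S τ + X * M.bufferCapacity := by
  refine sub_le_iff_le_add.1 (le_lateWork fun σ hσ => ?_)
  have hsplit : #{i ∈ S | τ < M.d i} =
      #{i ∈ S | σ < M.d i} + #{i ∈ S | τ < M.d i ∧ M.d i ≤ σ} := by
    rw [← card_filter_add_card_filter_not (s := {i ∈ S | τ < M.d i}) (σ < M.d ·),
      filter_filter, filter_filter]
    congr 2
    · exact filter_congr fun i _ => and_iff_right_of_imp hσ.trans_lt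
    · simp only [not_lt]
  have := hS.buffer τ σ
  rw [hsplit]
  push_cast
  linarith

lemma HallCondition.mul_card_above_add_one_le_lateWork (hX : 0 ≤ X) (hS : M.HallCondition X S)
    {i τ : ℕ} (hi : i ∈ S) (hτ : τ < M.t i) :
    X * (#{k ∈ S | i < k} + 1) ≤ M.lateWork X S τ := by
  refine le_lateWork fun σ _ => ?_
  have hcover : {k ∈ S | i ≤ k} ⊆ {k ∈ S | σ < M.d k} ∪ {k ∈ S | τ < M.t k ∧ M.d k ≤ σ} := by
    intro k hk
    have := M.tmono (mem_filter.1 hk).2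
    grind
  have hcard : #{k ∈ S | i < k} + 1 ≤
      #{k ∈ S | σ < M.d k} + #{k ∈ S | τ < M.t k ∧ M.d k ≤ σ} := by
    rw [← card_filter_le_eq_card_filter_lt_add_one hi]
    exact (card_le_card hcover).trans (card_union_le _ _)
  calc X * (#{k ∈ S | i < k} + 1)
      ≤ X * (#{k ∈ S | σ < M.d k} + #{k ∈ S | τ < M.t k ∧ M.d k ≤ σ}) := by
        gcongr X * ?_
        exact_mod_cast hcard
    _ ≤ X * #{k ∈ S | σ < M.d k} + M.bandwidth τ σ := by
        rw [mul_add]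
        gcongr
        exact hS.window τ σ

lemma lateWork_le_mul_card_above (hX : 0 ≤ X) {i τ : ℕ} (hτ : M.d i ≤ τ) :
    M.lateWork X S τ ≤ X * #{k ∈ S | i < k} := by
  have hsub : {k ∈ S | τ < M.d k} ⊆ {k ∈ S | i < k} :=
    monotone_filter_right S fun k _ hk => M.dmono.reflect_lt (hτ.trans_lt hk)
  exact (lateWork_le_mul_card_due hX τ).trans (by gcongr)

/-- The part of chunk `i ∈ S` that the latest schedule downloads after slot `τ`: chunk `i` occupies
the interval `[X * r, X * (r + 1)]` of the work axis, where `r` is the number of chunks of `S` above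
`i`, and the slots after `τ` serve the interval `[0, lateWork τ]`. -/
noncomputable def latePart (M : SchedModel) (X : ℝ) (S : Finset ℕ) (i τ : ℕ) : ℝ :=
  min (M.lateWork X S τ) (X * (#{k ∈ S | i < k} + 1)) -
    min (M.lateWork X S τ) (X * #{k ∈ S | i < k})

lemma latePart_antitone (hX : 0 ≤ X) (i : ℕ) : Antitone (M.latePart X S i) := fun _ _ h =>
  monotone_min_sub_min (by linarith) (lateWork_antitone hX h)

lemma latePart_eq_zero (hX : 0 ≤ X) {i τ : ℕ} (hτ : M.d i ≤ τ) : M.latePart X S i τ = 0 := by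
  have := lateWork_le_mul_card_above (S := S) hX hτ
  rw [latePart, min_eq_left (by linarith), min_eq_left this, sub_self]

lemma latePart_eq_of_le_lateWork (hX : 0 ≤ X) {i τ : ℕ}
    (h : X * (#{k ∈ S | i < k} + 1) ≤ M.lateWork X S τ) : M.latePart X S i τ = X := by
  rw [latePart, min_eq_right h, min_eq_right (by linarith)]
  ring

lemma sum_latePart (hX : 0 ≤ X) (τ : ℕ) : ∑ i ∈ S, M.latePart X S i τ = M.lateWork X S τ := by
  let served (r : ℕ) : ℝ := min (M.lateWork X S τ) (X * r)
  have hall : M.lateWork X S τ ≤ X * #S := (lateWork_le_mul_card_due hX τ).trans <| by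
    gcongr
    exact filter_subset _ _
  calc ∑ i ∈ S, M.latePart X S i τ
      = ∑ i ∈ S, (served (#{k ∈ S | i < k} + 1) - served #{k ∈ S | i < k}) := by
        simp only [latePart, served, Nat.cast_add, Nat.cast_one]
    _ = ∑ r ∈ range #S, (served (r + 1) - served r) :=
        sum_card_filter_lt S fun r => served (r + 1) - served r
    _ = served #S - served 0 := sum_range_sub served #S
    _ = M.lateWork X S τ := by simp [served, hall, lateWork_nonneg hX]

/-- The schedule that downloads the chunks of `S` as late as possible, higher indices last. -/
noncomputable def lateSchedule (M : SchedModel) (X : ℝ) (S : Finset ℕ) (i j : ℕ) : ℝ :=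
  if i ∈ S then M.latePart X S i (j - 1) - M.latePart X S i j else 0

lemma HallCondition.sum_lateSchedule (hX : 0 ≤ X) (hS : M.HallCondition X S) {i : ℕ} (hi : i ∈ S)
    (τ : ℕ) : ∑ j ∈ Icc 1 τ, M.lateSchedule X S i j = X - M.latePart X S i τ := by
  have hstart : M.latePart X S i 0 = X :=
    latePart_eq_of_le_lateWork hX (hS.mul_card_above_add_one_le_lateWork hX hi (M.ht i))
  simp only [lateSchedule, if_pos hi]
  induction τ with
  | zero => simp [hstart]
  | succ τ ih => rw [sum_Icc_succ_top (by omega), ih, Nat.add_sub_cancel, sub_add_sub_cancel]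

lemma sum_lateSchedule_le_B (hX : 0 ≤ X) (hS : S ⊆ Icc 1 M.C) (j : ℕ) :
    ∑ i ∈ Icc 1 M.C, M.lateSchedule X S i j ≤ M.B j := by
  have hsum : ∑ i ∈ Icc 1 M.C, M.lateSchedule X S i j =
      M.lateWork X S (j - 1) - M.lateWork X S j := by
    simp only [lateSchedule]
    rw [sum_ite_mem, inter_eq_right.2 hS, sum_sub_distrib, sum_latePart hX, sum_latePart hX]
  rw [hsum]
  cases j with
  | zero => simpa using M.hB 0
  | succ j => exact sub_le_iff_le_add'.2 (lateWork_le_lateWork_succ_add hX j)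

-- A started chunk lies partly beyond `lateWork τ` on the work axis, so at least
-- `#{τ < d} - bufferCapacity` chunks of `S` lie above it.
lemma HallCondition.card_started_le_bufferCapacity (hX : 0 ≤ X) (hS : M.HallCondition X S) (τ : ℕ) :
    #{i ∈ Icc 1 M.C | τ < M.d i ∧ 0 < ∑ j ∈ Icc 1 τ, M.lateSchedule X S i j} ≤
      M.bufferCapacity := by
  have mem_of_started : ∀ i, 0 < ∑ j ∈ Icc 1 τ, M.lateSchedule X S i j → i ∈ S := by
    intro i hi
    by_contra hiS
    simp [lateSchedule, hiS] at hi
  refine card_le_of_forall_card_le_card_filter_lt_add (S := {i ∈ S | τ < M.d i})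
    (fun i hi => by grind) fun i hi => ?_
  obtain ⟨-, hdue, hstarted⟩ := mem_filter.1 hi
  have hiS := mem_of_started i hstarted
  rw [hS.sum_lateSchedule hX hiS] at hstarted
  have habove : {k ∈ {k ∈ S | τ < M.d k} | i < k} = {k ∈ S | i < k} := by
    rw [filter_filter]
    refine filter_congr fun k _ => and_iff_right_of_imp fun hik => ?_
    exact hdue.trans_le (M.dmono hik.le)
  have hpartial : M.lateWork X S τ < X * (#{k ∈ S | i < k} + 1) := by
    by_contra! hle
    exact hstarted.ne' (sub_eq_zero.2 (latePart_eq_of_le_lateWork hX hle).symm)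
  have hlt : X * #{k ∈ S | τ < M.d k} < X * (#{k ∈ S | i < k} + 1 + M.bufferCapacity) := by
    linarith [hS.mul_card_due_le_lateWork_add τ]
  have hcard : #{k ∈ S | τ < M.d k} < #{k ∈ S | i < k} + 1 + M.bufferCapacity := by
    exact_mod_cast lt_of_mul_lt_mul_left hlt hX
  rw [habove]
  omega

lemma HallCondition.feasibleSet (hX : 0 ≤ X) (hS : S ⊆ Icc 1 M.C) (h : M.HallCondition X S) :
    M.FeasibleSet X S := by
  refine ⟨M.lateSchedule X S, fun i j => ?nonneg, fun i j hj => ?window, fun i _ => ?amount,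
    sum_lateSchedule_le_B hX hS,
    fun τ => le_bufferCapacity_iff.1 (h.card_started_le_bufferCapacity hX τ)⟩
  case nonneg =>
    unfold lateSchedule
    split_ifs
    · exact sub_nonneg.2 (latePart_antitone hX i (Nat.sub_le j 1))
    · exact le_rfl
  case window =>
    unfold lateSchedule
    split_ifs with hi
    · have full : ∀ τ < M.t i, M.latePart X S i τ = X := fun τ hτ =>
        latePart_eq_of_le_lateWork hX (h.mul_card_above_add_one_le_lateWork hX hi hτ)
      obtain hj | hj := hj
      · rw [full j hj, full (j - 1) (by omega), sub_self]
      · rw [latePart_eq_zero hX hj.le, latePart_eq_zero hX (by omega), sub_self]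
    · rfl
  case amount =>
    by_cases hi : i ∈ S
    · rw [h.sum_lateSchedule hX hi, latePart_eq_zero hX le_rfl, sub_zero]
      exact (if_pos hi).symm
    · simp [lateSchedule, hi]

theorem feasibleSet_iff_hallCondition (hX : 0 ≤ X) (hS : S ⊆ Icc 1 M.C) :
    M.FeasibleSet X S ↔ M.HallCondition X S :=
  ⟨FeasibleSet.hallCondition hX hS, HallCondition.feasibleSet hX hS⟩

/-! ### The feasible selections and the greedy selection -/

/-- The family of the feasible sets of chunks. -/
def feasibleSelections (M : SchedModel) (X : ℝ) : Set (Finset ℕ) :=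
  {S | S ⊆ Icc 1 M.C ∧ M.FeasibleSet X S}

lemma mem_feasibleSelections_iff (hX : 0 ≤ X) :
    S ∈ M.feasibleSelections X ↔ S ⊆ Icc 1 M.C ∧ M.HallCondition X S :=
  and_congr_right (feasibleSet_iff_hallCondition hX)

lemma isLowerSet_feasibleSelections (hX : 0 ≤ X) : IsLowerSet (M.feasibleSelections X) := by
  intro S T hTS hS
  rw [mem_feasibleSelections_iff hX] at hS ⊢
  exact ⟨hTS.trans hS.1, hS.2.mono hX hTS⟩

lemma hasExchange_feasibleSelections (hX : 0 ≤ X) : HasExchange (M.feasibleSelections X) := by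
  intro S s m hS hs hcompat
  rw [mem_feasibleSelections_iff hX] at hS hcompat ⊢
  refine ⟨insert_subset ?_ ((erase_subset s S).trans hS.1),
    hasExchange_hallCondition hX hS.2 hs hcompat.2⟩
  exact hcompat.1 (mem_insert_self m _)

lemma backGreedyAux_subset (M : SchedModel) (X : ℝ) {k : ℕ} (hk : k ≤ M.C) :
    M.backGreedyAux X k ⊆ Ioc (M.C - k) M.C := by
  induction k with
  | zero => simp [backGreedyAux]
  | succ k ih =>
    have := ih (by omega)
    unfold backGreedyAux
    grind

lemma backGreedy_subset (M : SchedModel) (X : ℝ) : M.backGreedy X ⊆ Icc 1 M.C := by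
  have := M.backGreedyAux_subset X le_rfl
  grind [backGreedy]

lemma backGreedyAux_eq_filter (M : SchedModel) (X : ℝ) {k : ℕ} (hk : k ≤ M.C) :
    M.backGreedyAux X k = {i ∈ M.backGreedy X | M.C - k < i} := by
  suffices ∀ n, k ≤ n → n ≤ M.C →
      M.backGreedyAux X k = {i ∈ M.backGreedyAux X n | M.C - k < i} from this M.C hk le_rfl
  intro n hkn
  induction n, hkn using Nat.le_induction with
  | base =>
    have := M.backGreedyAux_subset X hk
    grind
  | succ n hkn ih =>
    intro hn
    rw [ih (by omega)]
    conv_rhs => unfold backGreedyAux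
    grind

lemma isBackwardGreedy_backGreedy (M : SchedModel) (X : ℝ) :
    IsBackwardGreedy (M.feasibleSelections X) (M.backGreedy X) := by
  intro m
  by_cases hm : m ∈ Icc 1 M.C
  · obtain ⟨h1m, hmC⟩ := mem_Icc.1 hm
    have above : M.backGreedyAux X (M.C - m) = {k ∈ M.backGreedy X | m < k} := by
      rw [M.backGreedyAux_eq_filter X (Nat.sub_le _ _), Nat.sub_sub_self hmC]
    have step : m ∈ M.backGreedy X ↔ m ∈ M.backGreedyAux X (M.C - m + 1) := by
      rw [M.backGreedyAux_eq_filter X (by omega), mem_filter]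
      exact (and_iff_left (by omega)).symm
    rw [step, backGreedyAux, above, Nat.sub_sub_self hmC]
    grind [feasibleSelections, backGreedy_subset]
  · exact iff_of_false (fun h => hm (M.backGreedy_subset X h))
      fun h => hm (h.1 (mem_insert_self m _))

end SchedModel

/-- the backward greedy selection dominates every feasible selection
on every suffix {i, i+1, …, C}. -/
theorem backward_greedy_suffix_dominates (M : SchedModel) (X : ℝ) (hX : 0 < X) :
    ∀ S : Finset ℕ, S ⊆ Finset.Icc 1 M.C → M.FeasibleSet X S →
      ∀ i ∈ Finset.Icc 1 M.C,
        (S ∩ Finset.Icc i M.C).card ≤ (M.backGreedy X ∩ Finset.Icc i M.C).card := by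
  intro S hS hfeas i _
  have suffix_eq : ∀ T ⊆ Finset.Icc 1 M.C,
      T ∩ Finset.Icc i M.C = {k ∈ T | i ≤ k} := fun T hT => by
    ext k
    have := @hT k
    grind
  rw [suffix_eq S hS, suffix_eq _ (M.backGreedy_subset X)]
  exact (M.isBackwardGreedy_backGreedy X).card_filter_le_le
    (M.isLowerSet_feasibleSelections hX.le) (M.hasExchange_feasibleSelections hX.le) ⟨hS, hfeas⟩ i
end

section
/- (Lexicographic layer-priority lemma) Let N ≥ 1, C ≥ 1, β ≥ 1, let Y_0,…,Y_N > 0 be layer sizes, and let 0 < γ < 1 satisfy γ^a Y_a > (Σ_{k=a+1}^N γ^k Y_k) · (Σ_{i=1}^C β^i) for every a = 0,…,N−1. Let Z and Z′ be two layer-decision matrices with Z_{m,i}, Z′_{m,i} ∈ {0, Y_m} for all layers m = 0,…,N and chunks i = 1,…,C. If there is a layer a such that Z_{m,i} = Z′_{m,i} for all m < a and all i, and Σ_{i=1}^C β^i Z_{a,i} ≥ Σ_{i=1}^C β^i Z′_{a,i} + Y_a, then Σ_{m=0}^N γ^m Σ_{i=1}^C β^i Z_{m,i} > Σ_{m=0}^N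 γ^m Σ_{i=1}^C β^i Z′_{m,i}. That is, under the paper's condition on γ, gaining the a-th layer of even one chunk outweighs every possible gain from all layers above a of all chunks. -/
/-!
Compare the two objectives layer by layer. Below `a` nothing is lost, and layer `a` gains at least
`γ ^ a * Y a`. A layer `m` above `a` loses at most `Y m` in each chunk, so all of these layers
together lose at most `(∑ k > a, γ ^ k * Y k) * ∑ i, β ^ i`, which is less than the gain.
For the top layer there is nothing above to lose, and the gain is positive because `Y N` is.
-/

section Sum

variable {ι M : Type*} [LinearOrder ι] [AddCommMonoid M] [PartialOrder M]
  {s : Finset ι} {a : ι} {f g ε : ι → M} {δ : M}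

theorem sum_add_le_sum_add_sum_filter_lt [IsOrderedAddMonoid M] (ha : a ∈ s)
    (hbelow : ∀ m ∈ s, m < a → f m ≤ g m) (hgain : f a + δ ≤ g a)
    (habove : ∀ m ∈ s, a < m → f m ≤ g m + ε m) :
    ∑ m ∈ s, f m + δ ≤ ∑ m ∈ s, g m + ∑ m ∈ s with a < m, ε m := by
  have hpointwise : ∀ m ∈ s,
      f m + (if m = a then δ else 0) ≤ g m + (if a < m then ε m else 0) := by
    intro m hm
    rcases lt_trichotomy m a with hlt | rfl | hgt
    · simpa [hlt.ne, hlt.not_gt] using hbelow m hm hlt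
    · simpa using hgain
    · simpa [hgt.ne', hgt] using habove m hm hgt
  simpa [Finset.sum_add_distrib, Finset.sum_filter, ha] using Finset.sum_le_sum hpointwise

theorem sum_lt_sum_of_sum_filter_lt [IsOrderedCancelAddMonoid M] (ha : a ∈ s)
    (hbelow : ∀ m ∈ s, m < a → f m ≤ g m) (hgain : f a + δ ≤ g a)
    (habove : ∀ m ∈ s, a < m → f m ≤ g m + ε m) (hε : ∑ m ∈ s with a < m, ε m < δ) :
    ∑ m ∈ s, f m < ∑ m ∈ s, g m := by
  refine lt_of_add_lt_add_right (a := ∑ m ∈ s with a < m, ε m) ?_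
  calc ∑ m ∈ s, f m + ∑ m ∈ s with a < m, ε m
      < ∑ m ∈ s, f m + δ := by gcongr
    _ ≤ ∑ m ∈ s, g m + ∑ m ∈ s with a < m, ε m :=
        sum_add_le_sum_add_sum_filter_lt ha hbelow hgain habove

end Sum

theorem sum_mul_le_sum_mul_add_sum_mul {κ R : Type*} [Semiring R] [PartialOrder R]
    [IsOrderedRing R] {t : Finset κ} {v x y : κ → R} {c : R} (hv : ∀ i ∈ t, 0 ≤ v i)
    (hxy : ∀ i ∈ t, x i ≤ y i + c) :
    ∑ i ∈ t, v i * x i ≤ ∑ i ∈ t, v i * y i + (∑ i ∈ t, v i) * c := by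
  simp only [Finset.sum_mul, ← Finset.sum_add_distrib, ← mul_add]
  exact Finset.sum_le_sum fun i hi => mul_le_mul_of_nonneg_left (hxy i hi) (hv i hi)

theorem sum_filter_lt_mul_lt_of_sum_Icc_mul_lt {R : Type*} [NonUnitalNonAssocSemiring R]
    [Preorder R] {N a : ℕ} {u : ℕ → R} {B : R} (hu : 0 < u N)
    (hcond : ∀ b < N, (∑ k ∈ Finset.Icc (b + 1) N, u k) * B < u b) (ha : a ≤ N) :
    (∑ k ∈ Finset.Icc 0 N with a < k, u k) * B < u a := by
  have htail : {k ∈ Finset.Icc 0 N | a < k} = Finset.Icc (a + 1) N := by grind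
  rw [htail]
  rcases ha.lt_or_eq with hlt | rfl
  · exact hcond a hlt
  · simpa using hu

theorem le_add_of_eq_zero_or_eq {M : Type*} [AddZeroClass M] [Preorder M] [AddRightMono M]
    {x y c : M} (hc : 0 ≤ c) (hx : x = 0 ∨ x = c) (hy : y = 0 ∨ y = c) : x ≤ y + c := by
  have hxc : x ≤ c := by rcases hx with rfl | rfl <;> simp [hc]
  have hy0 : 0 ≤ y := by rcases hy with rfl | rfl <;> simp [hc]
  exact hxc.trans (le_add_of_nonneg_left hy0)

theorem layer_priority_general {ι κ R : Type*} [LinearOrder ι] [CommSemiring R] [PartialOrder R]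
    [IsStrictOrderedRing R] {s : Finset ι} {t : Finset κ} {w Y : ι → R} {v : κ → R}
    {Z Z' : ι → κ → R} {a : ι} (ha : a ∈ s)
    (hw : ∀ m ∈ s, 0 ≤ w m) (hv : ∀ i ∈ t, 0 ≤ v i)
    (hcond : (∑ k ∈ s with a < k, w k * Y k) * ∑ i ∈ t, v i < w a * Y a)
    (hbelow : ∀ m ∈ s, m < a → ∀ i ∈ t, Z' m i ≤ Z m i)
    (hgain : ∑ i ∈ t, v i * Z' a i + Y a ≤ ∑ i ∈ t, v i * Z a i)
    (habove : ∀ m ∈ s, a < m → ∀ i ∈ t, Z' m i ≤ Z m i + Y m) :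
    ∑ m ∈ s, w m * ∑ i ∈ t, v i * Z' m i < ∑ m ∈ s, w m * ∑ i ∈ t, v i * Z m i := by
  refine sum_lt_sum_of_sum_filter_lt (ε := fun m => w m * Y m * ∑ i ∈ t, v i) ha
    (fun m hm hlt => ?_) ?_ (fun m hm hgt => ?_) (by rwa [← Finset.sum_mul])
  · exact mul_le_mul_of_nonneg_left (Finset.sum_le_sum fun i hi =>
      mul_le_mul_of_nonneg_left (hbelow m hm hlt i hi) (hv i hi)) (hw m hm)
  · rw [← mul_add]
    exact mul_le_mul_of_nonneg_left hgain (hw a ha)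
  · calc w m * ∑ i ∈ t, v i * Z' m i
        ≤ w m * (∑ i ∈ t, v i * Z m i + (∑ i ∈ t, v i) * Y m) :=
          mul_le_mul_of_nonneg_left
            (sum_mul_le_sum_mul_add_sum_mul hv (habove m hm hgt)) (hw m hm)
      _ = w m * ∑ i ∈ t, v i * Z m i + w m * Y m * ∑ i ∈ t, v i := by ring

/-- lexicographic layer-priority lemma: under the paper's condition
(1) on γ, if two layer-decision matrices agree on all layers below `a` and `Z`
gains at least one chunk's `a`-th layer over `Z′` (in the β-weighted sum), then `Z`
has strictly larger overall objective, regardless of all layers above `a`. -/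
theorem layer_priority (N C : ℕ) (hN : 1 ≤ N) (hC : 1 ≤ C)
    (β γ : ℝ) (hβ : 1 ≤ β) (hγ0 : 0 < γ) (hγ1 : γ < 1)
    (Y : ℕ → ℝ) (hY : ∀ n ≤ N, 0 < Y n)
    (hcond : ∀ a < N,
      (∑ k ∈ Finset.Icc (a + 1) N, γ ^ k * Y k) * (∑ i ∈ Finset.Icc 1 C, β ^ i) <
        γ ^ a * Y a)
    (Z Z' : ℕ → ℕ → ℝ)
    (hZ : ∀ m ≤ N, ∀ i ∈ Finset.Icc 1 C, Z m i = 0 ∨ Z m i = Y m)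
    (hZ' : ∀ m ≤ N, ∀ i ∈ Finset.Icc 1 C, Z' m i = 0 ∨ Z' m i = Y m)
    (a : ℕ) (ha : a ≤ N)
    (hagree : ∀ m < a, ∀ i ∈ Finset.Icc 1 C, Z m i = Z' m i)
    (hgain : ∑ i ∈ Finset.Icc 1 C, β ^ i * Z' a i + Y a ≤
      ∑ i ∈ Finset.Icc 1 C, β ^ i * Z a i) :
    ∑ m ∈ Finset.Icc 0 N, γ ^ m * ∑ i ∈ Finset.Icc 1 C, β ^ i * Z' m i <
      ∑ m ∈ Finset.Icc 0 N, γ ^ m * ∑ i ∈ Finset.Icc 1 C, β ^ i * Z m i := by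
  have hβ0 : 0 ≤ β := zero_le_one.trans hβ
  exact layer_priority_general (Finset.mem_Icc.mpr ⟨a.zero_le, ha⟩)
    (fun m _ => pow_nonneg hγ0.le m) (fun i _ => pow_nonneg hβ0 i)
    (sum_filter_lt_mul_lt_of_sum_Icc_mul_lt (mul_pos (pow_pos hγ0 N) (hY N le_rfl)) hcond ha)
    (fun m _ hlt i hi => (hagree m hlt i hi).ge) hgain
    fun m hm _ i hi =>
      have hmN : m ≤ N := (Finset.mem_Icc.mp hm).2
      le_add_of_eq_zero_or_eq (hY m hmN).le (hZ' m hmN i hi) (hZ m hmN i hi)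
end

section
/- (Lemma 3) In the no-skip model, let d*(C) be the total stall duration produced by the no-skip base-layer forward algorithm, and let d′(C) be the total stall duration of any other feasible no-skip policy. Then d′(C) ≥ d*(C); i.e., the no-skip base-layer forward algorithm achieves the minimum possible total stall duration. Moreover, under the forward algorithm every chunk is completed no later than under any other in-order feasible no-skip policy. -/
/-!
No-skip model: C ≥ 1 chunks of duration L slots, each requiring full download of
its base-layer amount X_0 > 0; startup delay s ≥ 1; bandwidth B(j) ≥ 0; buffer of
B_m > 0 seconds. The deadline of chunk i is (i−1)L + s + d(i), where the cumulative
stall d(i) ≥ 0 is nondecreasing in i.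
-/

open scoped Classical

structure NSModel where
  C : ℕ
  hC : 1 ≤ C
  L : ℕ
  hL : 0 < L
  X0 : ℝ
  hX0 : 0 < X0
  s : ℕ
  hs : 1 ≤ s
  B : ℕ → ℝ
  hB : ∀ j, 0 ≤ B j
  Bm : ℝ
  hBm : 0 < Bm

/-- Deadline of chunk `i` under cumulative stalls `d`. -/
def NSModel.deadline (M : NSModel) (d : ℕ → ℕ) (i : ℕ) : ℕ :=
  (i - 1) * M.L + M.s + d i

/-- A feasible no-skip policy: nondecreasing stalls `d` together with an in-order
schedule `z` that fully downloads every chunk by its deadline, within bandwidth and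
buffer constraints. -/
def NSModel.IsPolicy (M : NSModel) (d : ℕ → ℕ) (z : ℕ → ℕ → ℝ) : Prop :=
  Monotone d ∧
  (∀ i j, 0 ≤ z i j) ∧
  (∀ i j, (j < 1 ∨ M.deadline d i < j) → z i j = 0) ∧
  (∀ i ∈ Finset.Icc 1 M.C, ∑ j ∈ Finset.Icc 1 (M.deadline d i), z i j = M.X0) ∧
  (∀ j, ∑ i ∈ Finset.Icc 1 M.C, z i j ≤ M.B j) ∧
  (∀ τ, (M.L : ℝ) * (((Finset.Icc 1 M.C).filter
      (fun i => τ < M.deadline d i ∧ 0 < ∑ j ∈ Finset.Icc 1 τ, z i j)).card : ℝ) ≤ M.Bm) ∧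
  (∀ i i' j j', i < i' → 0 < z i j → 0 < z i' j' → j ≤ j')

/-- Within-slot step of the no-skip base-layer forward algorithm: processing chunks
in order from index `i` with remaining slot bandwidth `b`, remaining amounts `rem`
and the stall values `dv` already fixed for completed chunks (the slot is left idle
when downloading would violate the buffer constraint); when the current chunk
completes at slot `j`, its stall is set to the minimum nondecreasing value for
which it meets its deadline. Returns the in-slot downloads and updated stalls. -/
noncomputable def NSModel.nsInner (M : NSModel) (j : ℕ) :
    ℕ → ℕ → ℝ → (ℕ → ℝ) → (ℕ → ℕ) → (ℕ → ℝ) × (ℕ → ℕ)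
  | 0, _, _, _, dv => (fun _ => 0, dv)
  | fuel + 1, i, b, rem, dv =>
    if M.C < i then (fun _ => 0, dv)
    else if rem i ≤ 0 then M.nsInner j fuel (i + 1) b rem dv
    else if b ≤ 0 then (fun _ => 0, dv)
    else if M.Bm < (M.L : ℝ) * (1 + (((Finset.Icc 1 (i - 1)).filter
        (fun i' => j < (i' - 1) * M.L + M.s + dv i')).card : ℝ)) then (fun _ => 0, dv)
    else if b < rem i then (fun i' => if i' = i then b else 0, dv)
    else
      let dv' := Function.update dv i (max (dv (i - 1)) (j - ((i - 1) * M.L + M.s)))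
      let rest := M.nsInner j fuel (i + 1) (b - rem i) (Function.update rem i 0) dv'
      (fun i' => (if i' = i then rem i else 0) + rest.1 i', rest.2)

/-- State (remaining amounts, fixed stall values) of the no-skip base-layer
forward algorithm after slot `j`. -/
noncomputable def NSModel.nsState (M : NSModel) : ℕ → (ℕ → ℝ) × (ℕ → ℕ)
  | 0 => (fun i => if i ∈ Finset.Icc 1 M.C then M.X0 else 0, fun _ => 0)
  | j + 1 =>
    let st := M.nsState j
    let step := M.nsInner (j + 1) (M.C + 1) 1 (M.B (j + 1)) st.1 st.2
    (fun i => st.1 i - step.1 i, step.2)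

/-- Cumulative stall of chunk `i` produced by the forward algorithm. -/
noncomputable def NSModel.nsStall (M : NSModel) (i : ℕ) : ℕ :=
  sSup {k | ∃ j, (M.nsState j).2 i = k}

/-- Completion slot of chunk `i` under the forward algorithm. -/
noncomputable def NSModel.nsCompl (M : NSModel) (i : ℕ) : ℕ :=
  sInf {j | (M.nsState j).1 i ≤ 0}

/-!
The invariant is that the forward algorithm never lags behind the given policy on any chunk and
never records a larger stall. Amounts left over by an in-order download form a chain: two such
vectors are comparable chunk by chunk as soon as their sums are. Hence, if the algorithm uses up the
bandwidth of a slot, comparing totals is enough to keep it ahead. If instead its buffer is full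
before chunk `i`, the policy, whose deadlines are no earlier, has no room for chunk `i` either and
makes no progress on the chunks from `i` on. A chunk completed by the algorithm in some slot was
unfinished under the policy before that slot, so the policy's deadline for it has not passed and the
recorded stall is at most the policy's.

The buffer comparison breaks down if `B_m < L`, since a policy may download a whole chunk in the
slot of its deadline, where the buffer constraint does not count it. In that case the algorithm
idles forever: no stall is recorded, and its completion slots are infima of empty sets, hence `0`.
-/

section InOrder

variable {ι α : Type*} {s : Finset ι} {X : α} {r p : ι → α}

/-- Vectors of remaining amounts that arise from downloading chunks of size `X`, indexed by `s`, in
increasing order: every chunk after an unfinished one is untouched. -/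
structure InOrder [LT ι] [Zero α] [Preorder α] (s : Finset ι) (X : α) (r : ι → α) : Prop where
  nonneg : ∀ k ∈ s, 0 ≤ r k
  le : ∀ k ∈ s, r k ≤ X
  eq_of_pos : ∀ k ∈ s, ∀ l ∈ s, k < l → 0 < r k → r l = X

theorem InOrder.nonpos_of_lt [LT ι] [Zero α] [LinearOrder α] (hr : InOrder s X r) {k l : ι}
    (hk : k ∈ s) (hl : l ∈ s) (hkl : k < l) (hlt : r l < X) : r k ≤ 0 :=
  not_lt.1 fun hpos => hlt.ne (hr.eq_of_pos k hk l hl hkl hpos)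

/-- If `p k < r k`, then `p` vanishes before `k` and `r` is maximal after `k`. -/
theorem InOrder.le_of_sum_le [LinearOrder ι] [AddCommMonoid α] [LinearOrder α]
    [IsOrderedCancelAddMonoid α] (hr : InOrder s X r) (hp : InOrder s X p)
    (hsum : ∑ k ∈ s, r k ≤ ∑ k ∈ s, p k) : ∀ k ∈ s, r k ≤ p k := by
  intro k hk
  by_contra! hlt
  refine hsum.not_gt (Finset.sum_lt_sum (fun m hm => ?_) ⟨k, hk, hlt⟩)
  rcases lt_trichotomy m k with hmk | rfl | hkm
  · exact (hp.nonpos_of_lt hm hk hmk (hlt.trans_le (hr.le k hk))).trans (hr.nonneg m hm)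
  · exact hlt.le
  · rw [hr.eq_of_pos k hk m hm hkm ((hp.nonneg k hk).trans_lt hlt)]
    exact hp.le m hm

theorem InOrder.update [Preorder ι] [DecidableEq ι] [Zero α] [Preorder α] (hr : InOrder s X r)
    {i : ι} {v : α} (hi : i ∈ s) (hpos : 0 < r i) (hdone : ∀ k ∈ s, k < i → r k ≤ 0)
    (hv0 : 0 ≤ v) (hv : v ≤ r i) : InOrder s X (Function.update r i v) where
  nonneg k hk := by
    rcases eq_or_ne k i with rfl | hne
    · simpa using hv0
    · simpa [hne] using hr.nonneg k hk
  le k hk := by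
    rcases eq_or_ne k i with rfl | hne
    · simpa using hv.trans (hr.le k hk)
    · simpa [hne] using hr.le k hk
  eq_of_pos k hk l hl hkl hposk := by
    rcases eq_or_ne k i with rfl | hne
    · simpa [hkl.ne'] using hr.eq_of_pos k hk l hl hkl hpos
    · rw [Function.update_of_ne hne] at hposk
      have hli : l ≠ i := by
        rintro rfl
        exact (hdone k hk hkl).not_gt hposk
      simpa [hli] using hr.eq_of_pos k hk l hl hkl hposk

end InOrder

section Update

variable {ι α : Type*} [DecidableEq ι]

theorem sum_update_eq_sum_sub_add [AddCommGroup α] {s : Finset ι} {i : ι} (hi : i ∈ s) (r : ι → α)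
    (v : α) : ∑ k ∈ s, Function.update r i v k = ∑ k ∈ s, r k - r i + v := by
  rw [Finset.sum_update_of_mem hi, Finset.sum_sdiff_eq_sub (Finset.singleton_subset_iff.2 hi),
    Finset.sum_singleton, add_comm]

theorem sub_ite_eq_update [SubtractionMonoid α] (r : ι → α) (i : ι) (x : α) (k : ι) :
    r k - (if k = i then x else 0) = Function.update r i (r i - x) k := by
  rcases eq_or_ne k i with rfl | hne <;> simp [*]

end Update

namespace NSModel

variable {M : NSModel} {d dv : ℕ → ℕ} {z : ℕ → ℕ → ℝ}

theorem deadline_mono (hd : Monotone d) : Monotone (M.deadline d) := fun _ _ hik =>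
  Nat.add_le_add (Nat.add_le_add_right (Nat.mul_le_mul_right _ (Nat.sub_le_sub_right hik 1)) _)
    (hd hik)

theorem deadline_le_deadline (hdv : dv ≤ d) (i : ℕ) : M.deadline dv i ≤ M.deadline d i :=
  Nat.add_le_add_left (hdv i) _

/-- The amount of chunk `k` that the schedule `z` has not downloaded by the end of slot `τ`. -/
def remaining (M : NSModel) (z : ℕ → ℕ → ℝ) (τ k : ℕ) : ℝ :=
  M.X0 - ∑ j ∈ Finset.Icc 1 τ, z k j

theorem remaining_succ (M : NSModel) (z : ℕ → ℕ → ℝ) (τ k : ℕ) :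
    M.remaining z (τ + 1) k = M.remaining z τ k - z k (τ + 1) := by
  rw [remaining, remaining, Finset.sum_Icc_succ_top (by omega), sub_add_eq_sub_sub]

theorem remaining_lt_iff {τ k : ℕ} :
    M.remaining z τ k < M.X0 ↔ 0 < ∑ j ∈ Finset.Icc 1 τ, z k j :=
  sub_lt_self_iff _

namespace IsPolicy

theorem monotone_stall (h : M.IsPolicy d z) : Monotone d := h.1

theorem download_nonneg (h : M.IsPolicy d z) (i j : ℕ) : 0 ≤ z i j := h.2.1 i j

theorem download_eq_zero (h : M.IsPolicy d z) {i j : ℕ} (hj : j < 1 ∨ M.deadline d i < j) :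
    z i j = 0 :=
  h.2.2.1 i j hj

theorem sum_download_le_bandwidth (h : M.IsPolicy d z) (j : ℕ) :
    ∑ i ∈ Finset.Icc 1 M.C, z i j ≤ M.B j :=
  h.2.2.2.2.1 j

theorem buffer_le (h : M.IsPolicy d z) (τ : ℕ) :
    (M.L : ℝ) * (((Finset.Icc 1 M.C).filter
      (fun i => τ < M.deadline d i ∧ 0 < ∑ j ∈ Finset.Icc 1 τ, z i j)).card : ℝ) ≤ M.Bm :=
  h.2.2.2.2.2.1 τ

theorem slot_le_of_chunk_lt (h : M.IsPolicy d z) {i i' j j' : ℕ} (hii' : i < i')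
    (hi : 0 < z i j) (hi' : 0 < z i' j') : j ≤ j' :=
  h.2.2.2.2.2.2 i i' j j' hii' hi hi'

theorem remaining_eq_zero (h : M.IsPolicy d z) {i τ : ℕ} (hi : i ∈ Finset.Icc 1 M.C)
    (hτ : M.deadline d i ≤ τ) : M.remaining z τ i = 0 := by
  rw [remaining, ← h.2.2.2.1 i hi, sub_eq_zero]
  refine Finset.sum_subset (Finset.Icc_subset_Icc_right hτ) fun j hj hj' => ?_
  simp only [Finset.mem_Icc] at hj hj'
  exact h.download_eq_zero (Or.inr (by omega))

theorem antitone_remaining (h : M.IsPolicy d z) (i : ℕ) : Antitone (M.remaining z · i) :=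
  antitone_nat_of_succ_le fun τ => by
    rw [remaining_succ]
    exact sub_le_self _ (h.download_nonneg i _)

theorem remaining_nonneg (h : M.IsPolicy d z) {i : ℕ} (hi : i ∈ Finset.Icc 1 M.C) (τ : ℕ) :
    0 ≤ M.remaining z τ i :=
  (h.remaining_eq_zero hi (le_max_right τ _)).ge.trans (h.antitone_remaining i (le_max_left τ _))

theorem lt_deadline (h : M.IsPolicy d z) {i τ : ℕ} (hi : i ∈ Finset.Icc 1 M.C)
    (hpos : 0 < M.remaining z τ i) : τ < M.deadline d i := by
  by_contra! hle
  exact hpos.ne' (h.remaining_eq_zero hi hle)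

theorem exists_download_pos (h : M.IsPolicy d z) {i τ : ℕ} (hi : i ∈ Finset.Icc 1 M.C)
    (hpos : 0 < M.remaining z τ i) : ∃ j, τ < j ∧ 0 < z i j := by
  by_contra! hidle
  have hconst : ∀ σ, τ ≤ σ → M.remaining z σ i = M.remaining z τ i := fun σ hσ => by
    induction σ, hσ using Nat.le_induction with
    | base => rfl
    | succ σ hσ ih =>
      rw [remaining_succ, ih, (hidle (σ + 1) (by omega)).antisymm (h.download_nonneg i _),
        sub_zero]
  exact hpos.ne' ((hconst _ (h.lt_deadline hi hpos).le).symm.trans (h.remaining_eq_zero hi le_rfl))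

theorem inOrder_remaining (h : M.IsPolicy d z) (τ : ℕ) :
    InOrder (Finset.Icc 1 M.C) M.X0 (M.remaining z τ) where
  nonneg k hk := h.remaining_nonneg hk τ
  le k _ := sub_le_self _ (Finset.sum_nonneg fun j _ => h.download_nonneg k j)
  eq_of_pos k hk l _ hkl hpos := by
    obtain ⟨j, hj, hz⟩ := h.exists_download_pos hk hpos
    refine sub_eq_self.2 (Finset.sum_eq_zero fun j' hj' => ?_)
    refine le_antisymm (not_lt.1 fun hz' => ?_) (h.download_nonneg l j')
    have hjj' := h.slot_le_of_chunk_lt hkl hz hz'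
    have hj'τ := (Finset.mem_Icc.1 hj').2
    omega

theorem remaining_lt_of_download_pos (h : M.IsPolicy d z) {k j : ℕ} (hz : 0 < z k j) :
    M.remaining z j k < M.X0 := by
  have hj : 1 ≤ j := not_lt.1 fun hj => hz.ne' (h.download_eq_zero (Or.inl hj))
  exact remaining_lt_iff.2 (Finset.sum_pos' (fun j' _ => h.download_nonneg k j')
    ⟨j, Finset.right_mem_Icc.2 hj, hz⟩)

theorem sum_pos_of_le_of_download_pos (h : M.IsPolicy d z) {m k j : ℕ}
    (hm : m ∈ Finset.Icc 1 M.C) (hk : k ∈ Finset.Icc 1 M.C) (hmk : m ≤ k) (hz : 0 < z k j) :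
    0 < ∑ j' ∈ Finset.Icc 1 j, z m j' := by
  have hlt := h.remaining_lt_of_download_pos hz
  rw [← remaining_lt_iff]
  rcases hmk.eq_or_lt with rfl | hmk
  · exact hlt
  · exact ((h.inOrder_remaining j).nonpos_of_lt hm hk hmk hlt).trans_lt M.hX0

/-- The chunks buffered by the algorithm, and chunk `i` itself as soon as there are any, are all
buffered by the policy at the end of slot `j`. -/
theorem buffer_fits_of_download_pos (h : M.IsPolicy d z) (hLB : (M.L : ℝ) ≤ M.Bm) (hdv : dv ≤ d)
    {i j k : ℕ} (hi : 1 ≤ i) (hik : i ≤ k) (hk : k ∈ Finset.Icc 1 M.C) (hz : 0 < z k j) :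
    (M.L : ℝ) * (1 + (((Finset.Icc 1 (i - 1)).filter
      (fun i' => j < M.deadline dv i')).card : ℝ)) ≤ M.Bm := by
  set F := (Finset.Icc 1 (i - 1)).filter (fun i' => j < M.deadline dv i')
  have hF : ∀ m ∈ F, 1 ≤ m ∧ m < i ∧ j < M.deadline d m := fun m hm => by
    obtain ⟨hm, hjm⟩ := Finset.mem_filter.1 hm
    rw [Finset.mem_Icc] at hm
    exact ⟨hm.1, by omega, hjm.trans_le (deadline_le_deadline hdv m)⟩
  rcases F.eq_empty_or_nonempty with hempty | ⟨m₀, hm₀⟩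
  · simpa [hempty] using hLB
  have hji : j < M.deadline d i :=
    (hF m₀ hm₀).2.2.trans_le (deadline_mono h.monotone_stall (hF m₀ hm₀).2.1.le)
  have hbuffered : ∀ m, 1 ≤ m → m ≤ k → j < M.deadline d m → m ∈ (Finset.Icc 1 M.C).filter
      (fun i => j < M.deadline d i ∧ 0 < ∑ j' ∈ Finset.Icc 1 j, z i j') := fun m hm hmk hjm => by
    have hmC := Finset.mem_Icc.2 ⟨hm, hmk.trans (Finset.mem_Icc.1 hk).2⟩
    exact Finset.mem_filter.2 ⟨hmC, hjm, h.sum_pos_of_le_of_download_pos hmC hk hmk hz⟩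
  have hcard := Finset.card_le_card (Finset.insert_subset (hbuffered i hi hik hji)
    fun m hm => hbuffered m (hF m hm).1 ((hF m hm).2.1.le.trans hik) (hF m hm).2.2)
  rw [Finset.card_insert_of_notMem fun hiF => (hF i hiF).2.1.false, add_comm] at hcard
  refine le_trans ?_ (h.buffer_le j)
  gcongr
  exact_mod_cast hcard

theorem min_stall_le (h : M.IsPolicy d z) (hdv : dv ≤ d) {i τ : ℕ} (hi : i ∈ Finset.Icc 1 M.C)
    (hpos : 0 < M.remaining z τ i) :
    max (dv (i - 1)) (τ + 1 - ((i - 1) * M.L + M.s)) ≤ d i :=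
  max_le ((hdv _).trans (h.monotone_stall (Nat.sub_le i 1)))
    (Nat.sub_le_iff_le_add'.2 (h.lt_deadline hi hpos))

end IsPolicy

/-- After slot `τ`, an algorithm with remaining amounts `rem` and recorded stalls `dv` is at least
as far as the policy `(d, z)` on every chunk, without having recorded larger stalls. -/
structure KeepsPace (M : NSModel) (d : ℕ → ℕ) (z : ℕ → ℕ → ℝ) (τ : ℕ) (rem : ℕ → ℝ)
    (dv : ℕ → ℕ) : Prop where
  inOrder : InOrder (Finset.Icc 1 M.C) M.X0 rem
  rem_le : ∀ k ∈ Finset.Icc 1 M.C, rem k ≤ M.remaining z τ k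
  stall_le : dv ≤ d

/-- The form of `KeepsPace` that is maintained during slot `τ + 1`, when the forward algorithm has
reached chunk `i` with bandwidth `b` left. The remaining amounts are still compared with those of
the policy before the slot; `sum_sub_le` says that spending `b` would bring the algorithm's total
level with or ahead of the policy's total after the slot. -/
structure KeepsPaceWithin (M : NSModel) (d : ℕ → ℕ) (z : ℕ → ℕ → ℝ) (τ i : ℕ) (b : ℝ)
    (rem : ℕ → ℝ) (dv : ℕ → ℕ) : Prop extends KeepsPace M d z τ rem dv where
  one_le : 1 ≤ i
  done : ∀ k ∈ Finset.Icc 1 M.C, k < i → rem k ≤ 0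
  sum_sub_le : ∑ k ∈ Finset.Icc 1 M.C, rem k - b ≤ ∑ k ∈ Finset.Icc 1 M.C, M.remaining z (τ + 1) k

section Slot

variable {τ i : ℕ} {b : ℝ} {rem : ℕ → ℝ}

theorem KeepsPace.within (hp : M.KeepsPace d z τ rem dv) (h : M.IsPolicy d z) :
    M.KeepsPaceWithin d z τ 1 (M.B (τ + 1)) rem dv where
  toKeepsPace := hp
  one_le := le_rfl
  done k hk hk1 := absurd (Finset.mem_Icc.1 hk).1 hk1.not_ge
  sum_sub_le := by
    simp only [remaining_succ, Finset.sum_sub_distrib]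
    exact sub_le_sub (Finset.sum_le_sum hp.rem_le) (h.sum_download_le_bandwidth (τ + 1))

namespace KeepsPaceWithin

theorem skip (hw : M.KeepsPaceWithin d z τ i b rem dv) (hi : rem i ≤ 0) :
    M.KeepsPaceWithin d z τ (i + 1) b rem dv where
  toKeepsPace := hw.toKeepsPace
  one_le := Nat.le_add_left 1 i
  done k hk hki := by
    rcases (Nat.lt_succ_iff.1 hki).eq_or_lt with rfl | hlt
    · exact hi
    · exact hw.done k hk hlt
  sum_sub_le := hw.sum_sub_le

theorem download (hw : M.KeepsPaceWithin d z τ i b rem dv) (hi : i ≤ M.C) (hpos : 0 < rem i)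
    {x : ℝ} (hx0 : 0 ≤ x) (hx : x ≤ rem i) :
    M.KeepsPaceWithin d z τ i (b - x) (Function.update rem i (rem i - x)) dv where
  inOrder := hw.inOrder.update (Finset.mem_Icc.2 ⟨hw.one_le, hi⟩) hpos hw.done
    (sub_nonneg.2 hx) (sub_le_self _ hx0)
  rem_le k hk :=
    (update_le_self_iff.2 (sub_le_self (rem i) hx0) k).trans (hw.rem_le k hk)
  stall_le := hw.stall_le
  one_le := hw.one_le
  done k hk hki := by
    rw [Function.update_of_ne hki.ne]
    exact hw.done k hk hki
  sum_sub_le := by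
    rw [sum_update_eq_sum_sub_add (Finset.mem_Icc.2 ⟨hw.one_le, hi⟩)]
    linarith [hw.sum_sub_le]

theorem complete (hw : M.KeepsPaceWithin d z τ i b rem dv) (h : M.IsPolicy d z) (hi : i ≤ M.C)
    (hpos : 0 < rem i) :
    M.KeepsPaceWithin d z τ (i + 1) (b - rem i) (Function.update rem i 0)
      (Function.update dv i (max (dv (i - 1)) (τ + 1 - ((i - 1) * M.L + M.s)))) := by
  have hiC : i ∈ Finset.Icc 1 M.C := Finset.mem_Icc.2 ⟨hw.one_le, hi⟩
  have hdownload := hw.download hi hpos hpos.le le_rfl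
  rw [sub_self] at hdownload
  exact { hdownload.skip (Function.update_self i 0 rem).le with
    stall_le := update_le_iff.2
      ⟨h.min_stall_le hw.stall_le hiC (hpos.trans_le (hw.rem_le i hiC)),
        fun k _ => hw.stall_le k⟩ }

theorem keepsPace_of_chunks_exhausted (hw : M.KeepsPaceWithin d z τ i b rem dv)
    (h : M.IsPolicy d z) (hi : M.C < i) : M.KeepsPace d z (τ + 1) rem dv where
  inOrder := hw.inOrder
  rem_le k hk :=
    (hw.done k hk ((Finset.mem_Icc.1 hk).2.trans_lt hi)).trans (h.remaining_nonneg hk (τ + 1))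
  stall_le := hw.stall_le

theorem keepsPace_of_bandwidth_exhausted (hw : M.KeepsPaceWithin d z τ i b rem dv)
    (h : M.IsPolicy d z) (hb : b ≤ 0) : M.KeepsPace d z (τ + 1) rem dv where
  inOrder := hw.inOrder
  rem_le := hw.inOrder.le_of_sum_le (h.inOrder_remaining (τ + 1)) (by linarith [hw.sum_sub_le])
  stall_le := hw.stall_le

theorem keepsPace_of_buffer_full (hw : M.KeepsPaceWithin d z τ i b rem dv) (h : M.IsPolicy d z)
    (hLB : (M.L : ℝ) ≤ M.Bm)
    (hfull : M.Bm < (M.L : ℝ) * (1 + (((Finset.Icc 1 (i - 1)).filter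
      (fun i' => τ + 1 < M.deadline dv i')).card : ℝ))) :
    M.KeepsPace d z (τ + 1) rem dv where
  inOrder := hw.inOrder
  rem_le k hk := by
    rcases lt_or_ge k i with hki | hik
    · exact (hw.done k hk hki).trans (h.remaining_nonneg hk (τ + 1))
    · have hidle : z k (τ + 1) ≤ 0 := not_lt.1 fun hz =>
        (h.buffer_fits_of_download_pos hLB hw.stall_le hw.one_le hik hk hz).not_gt hfull
      rw [remaining_succ]
      linarith [hw.rem_le k hk]
  stall_le := hw.stall_le

theorem keepsPace_nsInner (h : M.IsPolicy d z) (hLB : (M.L : ℝ) ≤ M.Bm) (fuel : ℕ)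
    (hw : M.KeepsPaceWithin d z τ i b rem dv) (hfuel : M.C < i + fuel) :
    M.KeepsPace d z (τ + 1) (fun k => rem k - (M.nsInner (τ + 1) fuel i b rem dv).1 k)
      (M.nsInner (τ + 1) fuel i b rem dv).2 := by
  induction fuel generalizing i b rem dv with
  | zero => simpa only [nsInner, sub_zero] using hw.keepsPace_of_chunks_exhausted h hfuel
  | succ fuel ih =>
    rw [nsInner]
    split_ifs with hC hdone hb hfull hlt
    · simpa only [sub_zero] using hw.keepsPace_of_chunks_exhausted h hC
    · exact ih (hw.skip hdone) (by omega)
    · simpa only [sub_zero] using hw.keepsPace_of_bandwidth_exhausted h hb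
    · simpa only [sub_zero] using hw.keepsPace_of_buffer_full h hLB hfull
    · simp only [sub_ite_eq_update]
      exact (hw.download (not_lt.1 hC) (not_le.1 hdone) (not_le.1 hb).le
        hlt.le).keepsPace_of_bandwidth_exhausted h (sub_self b).le
    · simp only [sub_add_eq_sub_sub, sub_ite_eq_update, sub_self]
      exact ih (hw.complete h (not_lt.1 hC) (not_le.1 hdone)) (by omega)

end KeepsPaceWithin

end Slot

theorem nsState_zero_fst {i : ℕ} (hi : i ∈ Finset.Icc 1 M.C) : (M.nsState 0).1 i = M.X0 :=
  if_pos hi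

theorem keepsPace_nsState (h : M.IsPolicy d z) (hLB : (M.L : ℝ) ≤ M.Bm) (τ : ℕ) :
    M.KeepsPace d z τ (M.nsState τ).1 (M.nsState τ).2 := by
  induction τ with
  | zero =>
    exact {
      inOrder := {
        nonneg := fun k hk => (nsState_zero_fst hk).symm ▸ M.hX0.le
        le := fun k hk => (nsState_zero_fst hk).le
        eq_of_pos := fun _ _ l hl _ _ => nsState_zero_fst hl }
      rem_le := fun k hk => by simp [nsState_zero_fst hk, remaining]
      stall_le := fun _ => Nat.zero_le _ }
  | succ τ ih => exact (ih.within h).keepsPace_nsInner h hLB (M.C + 1) (by omega)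

theorem nsInner_eq_of_buffer_lt (hLB : M.Bm < M.L) (j fuel i : ℕ) (b : ℝ) (rem : ℕ → ℝ)
    (dv : ℕ → ℕ) : M.nsInner j fuel i b rem dv = (fun _ => 0, dv) := by
  induction fuel generalizing i with
  | zero => rfl
  | succ fuel ih =>
    have hfull : M.Bm < (M.L : ℝ) * (1 + (((Finset.Icc 1 (i - 1)).filter
        (fun i' => j < (i' - 1) * M.L + M.s + dv i')).card : ℝ)) :=
      hLB.trans_le (le_mul_of_one_le_right (Nat.cast_nonneg _)
        (le_add_of_nonneg_right (Nat.cast_nonneg _)))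
    rw [nsInner, ih, if_pos hfull]
    simp only [ite_self]

theorem nsState_eq_zero_of_buffer_lt (hLB : M.Bm < M.L) (j : ℕ) : M.nsState j = M.nsState 0 := by
  induction j with
  | zero => rfl
  | succ j ih =>
    rw [← ih, nsState]
    simp only [nsInner_eq_of_buffer_lt hLB, sub_zero]

/-- `nsCompl` is the infimum of an empty set here. -/
theorem nsCompl_eq_zero_of_buffer_lt (hLB : M.Bm < M.L) {i : ℕ} (hi : i ∈ Finset.Icc 1 M.C) :
    M.nsCompl i = 0 := by
  refine Nat.sInf_eq_zero.2 (Or.inr (Set.eq_empty_of_forall_notMem fun j hj => ?_))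
  rw [Set.mem_ofPred_eq, nsState_eq_zero_of_buffer_lt hLB, nsState_zero_fst hi] at hj
  exact hj.not_gt M.hX0

theorem IsPolicy.nsState_snd_le (h : M.IsPolicy d z) (j : ℕ) : (M.nsState j).2 ≤ d := by
  rcases lt_or_ge M.Bm (M.L : ℝ) with hLB | hLB
  · rw [nsState_eq_zero_of_buffer_lt hLB]
    exact fun _ => Nat.zero_le _
  · exact (keepsPace_nsState h hLB j).stall_le

theorem IsPolicy.nsStall_le (h : M.IsPolicy d z) (i : ℕ) : M.nsStall i ≤ d i := by
  refine csSup_le ⟨_, 0, rfl⟩ ?_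
  rintro _ ⟨j, rfl⟩
  exact h.nsState_snd_le j i

theorem IsPolicy.nsCompl_le_of_remaining_nonpos (h : M.IsPolicy d z) {i τ : ℕ}
    (hi : i ∈ Finset.Icc 1 M.C) (hτ : M.remaining z τ i ≤ 0) : M.nsCompl i ≤ τ := by
  rcases lt_or_ge M.Bm (M.L : ℝ) with hLB | hLB
  · exact (nsCompl_eq_zero_of_buffer_lt hLB hi).trans_le (Nat.zero_le τ)
  · exact Nat.sInf_le (((keepsPace_nsState h hLB τ).rem_le i hi).trans hτ)

end NSModel

/-- Lemma 3: the no-skip base-layer forward algorithm achieves the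
minimum possible total stall duration, and completes every chunk no later than any
other in-order feasible no-skip policy. -/
theorem noskip_forward_min_stall (M : NSModel) (d : ℕ → ℕ) (z : ℕ → ℕ → ℝ)
    (h : M.IsPolicy d z) :
    M.nsStall M.C ≤ d M.C ∧
    ∀ i ∈ Finset.Icc 1 M.C,
      M.nsCompl i ≤ sInf {j | ∑ j' ∈ Finset.Icc 1 j, z i j' = M.X0} := by
  refine ⟨h.nsStall_le M.C, fun i hi => ?_⟩
  have hfinished : ∃ j, ∑ j' ∈ Finset.Icc 1 j, z i j' = M.X0 :=
    ⟨M.deadline d i, (sub_eq_zero.1 (h.remaining_eq_zero hi le_rfl)).symm⟩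
  have hsum := Nat.sInf_mem hfinished
  exact h.nsCompl_le_of_remaining_nonpos hi (sub_eq_zero.2 hsum.symm).le
end
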